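/- Assume ν({−1}) = ν({1}) = 0 and define f(t) := (1/(2π)) ∫_{[−1,1]} (1−λ²)/(1+λ²−2λ·cos t) ν(dλ) and F(x) := ∫₀^x f(t) dt. Let α ∈ [1,2) and let h be slowly varying at infinity. Then Var_n ~ n^α h(n) as n → ∞ if and only if F(x) ~ (1/2)·C(α)·x^{2−α}·h(1/x) as x → 0⁺. -/

import Mathlib

open MeasureTheory Filter Topology Set

/-- A function `h : (0,∞) → (0,∞)` is slowly varying at infinity: positive and
continuous on `(0,∞)` with `h(st)/h(t) → 1` as `t → ∞` for every `s > 0`. -/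
def SlowlyVaryingAtTop (h : ℝ → ℝ) : Prop :=
  (∀ t > 0, 0 < h t) ∧ ContinuousOn h (Set.Ioi 0) ∧
    ∀ s > 0, Tendsto (fun t => h (s * t) / h t) atTop (𝓝 1)

/-- `C(α) = Γ(1+α) sin(απ/2) / (π(2-α))`. -/
noncomputable def Cconst (α : ℝ) : ℝ :=
  Real.Gamma (1 + α) * Real.sin (α * Real.pi / 2) / (Real.pi * (2 - α))

/-- The variance sequence `Var_n = ∫ (n + 2 ∑_{k=1}^{n-1} (n-k) λ^k) ν(dλ)`. -/
noncomputable def VarSeqR (ν : Measure ℝ) (n : ℕ) : ℝ :=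
  ∫ l, ((n : ℝ) + 2 * ∑ k ∈ Finset.Ico 1 n, ((n : ℝ) - (k : ℝ)) * l ^ k) ∂ν


/-- Weight function. -/
noncomputable def u0 (v : ℝ) : ℝ := 1 / (1 + v)

lemma u0_pos {v : ℝ} (hv : 0 < v) : 0 < u0 v := by unfold u0; positivity

/-- Admissible test functions. -/
def Adm (g : ℝ → ℝ) : Prop :=
  ContinuousOn g (Ioi 0) ∧ (∃ C, ∀ v > 0, |g v| ≤ C * u0 v) ∧ ∃ c, Tendsto g (𝓝[>] 0) (𝓝 c)

lemma Adm.lin {g₁ g₂ : ℝ → ℝ} (a b : ℝ) (h₁ : Adm g₁) (h₂ : Adm g₂) :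
    Adm (fun v => a * g₁ v + b * g₂ v) := by
  obtain ⟨c1, ⟨C1, b1⟩, l1, t1⟩ := h₁
  obtain ⟨c2, ⟨C2, b2⟩, l2, t2⟩ := h₂
  refine ⟨by fun_prop, ⟨|a| * C1 + |b| * C2, fun v hv => ?_⟩, a * l1 + b * l2,
    (t1.const_mul a).add (t2.const_mul b)⟩
  calc |a * g₁ v + b * g₂ v| ≤ |a * g₁ v| + |b * g₂ v| := abs_add_le _ _
    _ = |a| * |g₁ v| + |b| * |g₂ v| := by rw [abs_mul, abs_mul]
    _ ≤ |a| * (C1 * u0 v) + |b| * (C2 * u0 v) := by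
      gcongr
      · exact b1 v hv
      · exact b2 v hv
    _ = _ := by ring

/-- Functionals on admissible functions, linear and bounded. -/
structure BFun (Λ : (ℝ → ℝ) → ℝ) (K : ℝ) : Prop where
  lin : ∀ (a b : ℝ) (g₁ g₂ : ℝ → ℝ), Adm g₁ → Adm g₂ →
    Λ (fun v => a * g₁ v + b * g₂ v) = a * Λ g₁ + b * Λ g₂
  bd : ∀ (ε : ℝ) (g : ℝ → ℝ), 0 ≤ ε → Adm g → (∀ v > 0, |g v| ≤ ε * u0 v) → |Λ g| ≤ K * ε

lemma BFun.sub_bd {Λ : (ℝ → ℝ) → ℝ} {K : ℝ} (h : BFun Λ K) {ε : ℝ} (hε : 0 ≤ ε) {g₁ g₂ : ℝ → ℝ}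
    (h₁ : Adm g₁) (h₂ : Adm g₂) (hb : ∀ v > 0, |g₁ v - g₂ v| ≤ ε * u0 v) :
    |Λ g₁ - Λ g₂| ≤ K * ε := by
  have e := h.lin 1 (-1) g₁ g₂ h₁ h₂
  have := h.bd ε _ hε (h₁.lin 1 (-1) h₂) (fun v hv => by
    have := hb v hv
    rwa [show 1 * g₁ v + -1 * g₂ v = g₁ v - g₂ v by ring])
  rw [e] at this
  rwa [show Λ g₁ - Λ g₂ = 1 * Λ g₁ + -1 * Λ g₂ by ring]

lemma BFun.congr {Λ : (ℝ → ℝ) → ℝ} {K : ℝ} (h : BFun Λ K) {g₁ g₂ : ℝ → ℝ}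
    (h₁ : Adm g₁) (h₂ : Adm g₂) (hb : ∀ v > 0, g₁ v = g₂ v) : Λ g₁ = Λ g₂ := by
  have := h.sub_bd le_rfl h₁ h₂ (fun v hv => by simp [hb v hv])
  simp only [mul_zero, abs_nonpos_iff] at this
  linarith

lemma Adm.congr {g₁ g₂ : ℝ → ℝ}
    (h₁ : Adm g₁) (hb : ∀ v > 0, g₁ v = g₂ v) : Adm g₂ := by
  obtain ⟨c1, ⟨C1, b1⟩, l1, t1⟩ := h₁
  refine ⟨c1.congr (fun v hv => (hb v hv).symm), ⟨C1, fun v hv => by rw [← hb v hv]; exact b1 v hv⟩, l1, 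
    t1.congr' ?_⟩
  filter_upwards [self_mem_nhdsWithin] with v hv using hb v hv

/-- Class of functions along which convergence to the limit functional holds. -/
def Cls (L : ℝ → (ℝ → ℝ) → ℝ) (Λ : (ℝ → ℝ) → ℝ) (g : ℝ → ℝ) : Prop :=
  Adm g ∧ Tendsto (fun T => L T g) atTop (𝓝 (Λ g))

section
variable {L : ℝ → (ℝ → ℝ) → ℝ} {Λ : (ℝ → ℝ) → ℝ} {K : ℝ}

lemma Cls.lin (hΛ : BFun Λ K) (hL : ∀ᶠ T in atTop, BFun (L T) K) {g₁ g₂ : ℝ → ℝ} (a b : ℝ)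
    (h₁ : Cls L Λ g₁) (h₂ : Cls L Λ g₂) : Cls L Λ (fun v => a * g₁ v + b * g₂ v) := by
  refine ⟨h₁.1.lin a b h₂.1, ?_⟩
  rw [hΛ.lin a b _ _ h₁.1 h₂.1]
  refine ((h₁.2.const_mul a).add (h₂.2.const_mul b)).congr' ?_
  filter_upwards [hL] with T hT
  rw [hT.lin a b _ _ h₁.1 h₂.1]

lemma Cls.congr (hΛ : BFun Λ K) (hL : ∀ᶠ T in atTop, BFun (L T) K) {g₁ g₂ : ℝ → ℝ}
    (h₁ : Cls L Λ g₁) (hb : ∀ v > 0, g₁ v = g₂ v) : Cls L Λ g₂ := by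
  have ha := h₁.1.congr hb
  refine ⟨ha, ?_⟩
  rw [← hΛ.congr h₁.1 ha hb]
  refine h₁.2.congr' ?_
  filter_upwards [hL] with T hT
  rw [hT.congr h₁.1 ha hb]

lemma Cls.closed (hΛ : BFun Λ K) (hL : ∀ᶠ T in atTop, BFun (L T) K) {g : ℝ → ℝ}
    (hg : Adm g) (h : ∀ ε > 0, ∃ g', Cls L Λ g' ∧ ∀ v > 0, |g v - g' v| ≤ ε * u0 v) :
    Cls L Λ g := by
  refine ⟨hg, ?_⟩
  rw [Metric.tendsto_atTop']
  have hK : 0 ≤ K := by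
    have h := hΛ.bd 1 (fun _ => 0) zero_le_one ⟨continuousOn_const, ⟨0, by simp⟩, 0, tendsto_const_nhds⟩
      (fun v hv => by simpa using (u0_pos hv).le)
    linarith [abs_nonneg (Λ fun _ => 0)]
  intro ε hε
  obtain ⟨g', hg', hb⟩ := h (ε / (4 * (K + 1))) (by positivity)
  have h1 := hΛ.sub_bd (by positivity) hg hg'.1 hb
  have hKe : K * (ε / (4 * (K + 1))) ≤ ε / 4 := by
    rw [← mul_div_assoc, div_le_div_iff₀ (by positivity) (by positivity)]
    nlinarith
  have h2 := (Metric.tendsto_nhds.1 hg'.2) (ε / 4) (by positivity)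
  obtain ⟨N, hN⟩ := eventually_atTop.1 (hL.and h2)
  refine ⟨N, fun T hT => ?_⟩
  obtain ⟨a1, a2⟩ := hN T hT.le
  have h3 := a1.sub_bd (by positivity) hg hg'.1 hb
  rw [Real.dist_eq] at a2 ⊢
  have e : L T g - Λ g = (L T g - L T g') + (L T g' - Λ g') - (Λ g - Λ g') := by ring
  rw [e]
  have := abs_sub (L T g - L T g' + (L T g' - Λ g')) (Λ g - Λ g')
  have := abs_add_le (L T g - L T g') (L T g' - Λ g')
  linarith

end

/-- Second-order bound on difference quotients. -/
lemma diffquot_bound (φ φ' φ'' : ℝ → ℝ → ℝ) (y : ℝ) (M : ℝ)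
    (h1 : ∀ v > 0, ∀ z ∈ Icc y (y+1), HasDerivAt (fun z => φ z v) (φ' z v) z)
    (h2 : ∀ v > 0, ∀ z ∈ Icc y (y+1), HasDerivAt (fun z => φ' z v) (φ'' z v) z)
    (h3 : ∀ v > 0, ∀ z ∈ Icc y (y+1), |φ'' z v| ≤ M * u0 v) (ε : ℝ) (hε : 0 < ε) (hε1 : ε ≤ 1)
    (v : ℝ) (hv : 0 < v) :
    |(φ (y + ε) v - φ y v) / ε - φ' y v| ≤ (M * ε) * u0 v := by
  have hsub : ∀ z ∈ Icc y (y+ε), z ∈ Icc y (y+1) := fun z hz => ⟨hz.1, by linarith [hz.2]⟩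
  have hM : 0 ≤ M * u0 v := (abs_nonneg _).trans (h3 v hv y ⟨le_rfl, by linarith⟩)
  have hy : y ∈ Icc y (y+ε) := ⟨le_rfl, by linarith⟩
  have hye : y + ε ∈ Icc y (y+ε) := ⟨by linarith, le_rfl⟩
  have hlip : ∀ z ∈ Icc y (y+ε), ‖φ' z v - φ' y v‖ ≤ M * u0 v * ε := by
    intro z hz
    have := (convex_Icc y (y+ε)).norm_image_sub_le_of_norm_hasDerivWithin_le
      (f := fun z => φ' z v) (f' := fun z => φ'' z v) (C := M * u0 v)
      (fun x hx => (h2 v hv x (hsub x hx)).hasDerivWithinAt)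
      (fun x hx => h3 v hv x (hsub x hx)) hy hz
    refine this.trans ?_
    gcongr
    rw [Real.norm_eq_abs, abs_of_nonneg (by linarith [hz.1])]
    linarith [hz.2]
  have := (convex_Icc y (y+ε)).norm_image_sub_le_of_norm_hasDerivWithin_le
      (f := fun z => φ z v - φ' y v * z) (f' := fun z => φ' z v - φ' y v) (C := M * u0 v * ε)
      (fun x hx => ((h1 v hv x (hsub x hx)).sub (by
        simpa using (hasDerivAt_id x).const_mul (φ' y v))).hasDerivWithinAt)
      hlip hy hye
  simp only [Real.norm_eq_abs] at this
  have e : (φ (y + ε) v - φ y v) / ε - φ' y v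
    = (φ (y + ε) v - φ' y v * (y + ε) - (φ y v - φ' y v * y)) / ε := by
    field_simp; ring
  rw [e, abs_div, abs_of_pos hε, div_le_iff₀ hε]
  rw [show y + ε - y = ε by ring, abs_of_pos hε] at this
  linarith

lemma BFun.deriv {Λ : (ℝ → ℝ) → ℝ} {K : ℝ} (hΛ : BFun Λ K) (φ φ' φ'' : ℝ → ℝ → ℝ) (y : ℝ) (M : ℝ)
    (h1 : ∀ v > 0, ∀ z ∈ Icc y (y+1), HasDerivAt (fun z => φ z v) (φ' z v) z)
    (h2 : ∀ v > 0, ∀ z ∈ Icc y (y+1), HasDerivAt (fun z => φ' z v) (φ'' z v) z)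
    (h3 : ∀ v > 0, ∀ z ∈ Icc y (y+1), |φ'' z v| ≤ M * u0 v)
    (ha : ∀ z ∈ Icc y (y+1), Adm (φ z)) (ha' : Adm (φ' y)) :
    Tendsto (fun ε => (Λ (φ (y + ε)) - Λ (φ y)) / ε) (𝓝[>] 0) (𝓝 (Λ (φ' y))) := by
  have hM : 0 ≤ M := by
    have := (abs_nonneg _).trans (h3 1 one_pos y ⟨le_rfl, by linarith⟩)
    unfold u0 at this; linarith
  have hlim : Tendsto (fun ε : ℝ => K * (M * ε)) (𝓝[>] 0) (𝓝 0) := by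
    have : Tendsto (fun ε : ℝ => K * (M * ε)) (𝓝 0) (𝓝 (K * (M * 0))) := by
      apply Continuous.tendsto; fun_prop
    simp only [mul_zero] at this
    exact this.mono_left nhdsWithin_le_nhds
  rw [tendsto_iff_dist_tendsto_zero]
  refine squeeze_zero' (Eventually.of_forall fun _ => dist_nonneg) ?_ hlim
  filter_upwards [Ioc_mem_nhdsGT (zero_lt_one' ℝ)] with ε hε
  have hay := ha y ⟨le_rfl, by linarith⟩
  have hae := ha (y + ε) ⟨by linarith [hε.1], by linarith [hε.2]⟩
  have e := hΛ.lin (1/ε) (-1/ε) _ _ hae hay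
  have : (Λ (φ (y + ε)) - Λ (φ y)) / ε = Λ (fun v => 1/ε * φ (y+ε) v + -1/ε * φ y v) := by
    rw [e]; ring
  rw [this, Real.dist_eq]
  refine hΛ.sub_bd (mul_nonneg hM hε.1.le) (hae.lin _ _ hay) ha' (fun v hv => ?_)
  have := diffquot_bound φ φ' φ'' y M h1 h2 h3 ε hε.1 hε.2 v hv
  rwa [show 1/ε * φ (y+ε) v + -1/ε * φ y v = (φ (y + ε) v - φ y v) / ε by ring]

lemma Cls.deriv {L : ℝ → (ℝ → ℝ) → ℝ} {Λ : (ℝ → ℝ) → ℝ} {K : ℝ}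
    (hΛ : BFun Λ K) (hL : ∀ᶠ T in atTop, BFun (L T) K)
    (φ φ' φ'' : ℝ → ℝ → ℝ) (y : ℝ) (M : ℝ)
    (h1 : ∀ v > 0, ∀ z ∈ Icc y (y+1), HasDerivAt (fun z => φ z v) (φ' z v) z)
    (h2 : ∀ v > 0, ∀ z ∈ Icc y (y+1), HasDerivAt (fun z => φ' z v) (φ'' z v) z)
    (h3 : ∀ v > 0, ∀ z ∈ Icc y (y+1), |φ'' z v| ≤ M * u0 v)
    (ha : ∀ z ∈ Icc y (y+1), Cls L Λ (φ z)) (ha' : Adm (φ' y)) : Cls L Λ (φ' y) := by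
  have hM : 0 ≤ M := by
    have := (abs_nonneg _).trans (h3 1 one_pos y ⟨le_rfl, by linarith⟩)
    unfold u0 at this; linarith
  refine Cls.closed hΛ hL ha' (fun δ hδ => ?_)
  obtain ⟨ε, hε0, hε1, hε2⟩ : ∃ ε : ℝ, 0 < ε ∧ ε ≤ 1 ∧ M * ε ≤ δ := by
    refine ⟨min 1 (δ / (M + 1)), by positivity, min_le_left _ _, ?_⟩
    calc M * min 1 (δ / (M + 1)) ≤ M * (δ / (M+1)) := by gcongr; exact min_le_right _ _
      _ ≤ δ := by
        rw [← mul_div_assoc, div_le_iff₀ (by positivity)]; nlinarith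
  refine ⟨_, (ha (y + ε) ⟨by linarith, by linarith⟩).lin hΛ hL (1/ε) (-1/ε)
    (ha y ⟨le_rfl, by linarith⟩), fun v hv => ?_⟩
  have := diffquot_bound φ φ' φ'' y M h1 h2 h3 ε hε0 hε1 v hv
  rw [abs_sub_comm, show 1/ε * φ (y+ε) v + -1/ε * φ y v = (φ (y + ε) v - φ y v) / ε by ring]
  refine this.trans ?_
  have := u0_pos hv
  gcongr


lemma weier (s w : ℝ → ℝ) (K c : ℝ) (hK : 0 < K) (hs : ContinuousOn s (Ioo 0 1))
    (hw : ∀ x ∈ Ioo (0:ℝ) 1, x ≤ K * w x)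
    (hs0 : ∀ ε > 0, ∃ δ > 0, ∀ x ∈ Ioo (0:ℝ) 1, x < δ → |s x| ≤ ε * w x)
    (hl0 : Tendsto s (𝓝[>] 0) (𝓝 0)) (hl1 : Tendsto s (𝓝[<] 1) (𝓝 c)) (ε : ℝ) (hε : 0 < ε) :
    ∃ p : Polynomial ℝ, ∀ x ∈ Ioo (0:ℝ) 1, |s x - x * p.eval x| ≤ ε * w x := by
  obtain ⟨δ, hδ, hδs⟩ := hs0 (ε / 2) (by positivity)
  have hmax : ∀ x : ℝ, 0 < max x δ := fun x => lt_max_of_lt_right hδ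
  set R : ℝ → ℝ := fun x => s x / max x δ with hR
  have hRc : ContinuousOn R (Ioo 0 1) :=
    hs.div (by fun_prop) (fun x _ => (hmax x).ne')
  have hm : Continuous (fun x : ℝ => max x δ) := by fun_prop
  have hR0 : Tendsto R (𝓝[>] 0) (𝓝 (0 / max 0 δ)) :=
    hl0.div ((hm.tendsto 0).mono_left nhdsWithin_le_nhds) (hmax 0).ne'
  have hR1 : Tendsto R (𝓝[<] 1) (𝓝 (c / max 1 δ)) :=
    hl1.div ((hm.tendsto 1).mono_left nhdsWithin_le_nhds) (hmax 1).ne'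
  have hE := continuousOn_Icc_extendFrom_Ioo hRc hR0 hR1
  obtain ⟨p, hp⟩ := exists_polynomial_near_of_continuousOn 0 1 _ hE (ε / (2 * K)) (by positivity)
  refine ⟨p, fun x hx => ?_⟩
  have hpx := hp x ⟨hx.1.le, hx.2.le⟩
  have hEx : extendFrom (Ioo (0:ℝ) 1) R x = R x :=
    extendFrom_eq (subset_closure hx) ((hRc x hx).tendsto)
  rw [hEx] at hpx
  have hwx := hw x hx
  have h1 : |x * R x - x * p.eval x| ≤ ε / 2 * w x := by
    rw [← mul_sub, abs_mul, abs_of_pos hx.1, abs_sub_comm]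
    calc x * |p.eval x - R x| ≤ (K * w x) * (ε / (2 * K)) := by
          apply mul_le_mul hwx hpx.le (abs_nonneg _) (hx.1.le.trans hwx)
      _ = _ := by field_simp
  have hwpos : 0 ≤ w x := by
    by_contra hcon
    push Not at hcon
    nlinarith [hx.1]
  have h2 : |s x - x * R x| ≤ ε / 2 * w x := by
    rcases le_or_gt δ x with hd | hd
    · have : x * R x = s x := by
        simp only [hR, max_eq_left hd]; field_simp [hx.1.ne']
      rw [this]; simp; positivity
    · refine le_trans ?_ (hδs x hx hd)
      have : s x - x * R x = s x * (1 - x / δ) := by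
        simp only [hR, max_eq_right hd.le]; ring
      rw [this, abs_mul]
      have h01 : |1 - x / δ| ≤ 1 := by
        have := (div_lt_one hδ).2 hd
        have : 0 < x / δ := div_pos hx.1 hδ
        rw [abs_le]; constructor <;> linarith
      exact mul_le_of_le_one_right (abs_nonneg _) h01
  calc |s x - x * p.eval x| ≤ |s x - x * R x| + |x * R x - x * p.eval x| := abs_sub_le _ _ _
    _ ≤ _ := by linarith

noncomputable def kA (y v : ℝ) : ℝ := Real.arctan (y * v) / v
noncomputable def kB (y v : ℝ) : ℝ := 1 / (1 + (y * v) ^ 2)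
noncomputable def kD (j : ℕ) (a v : ℝ) : ℝ := 1 / (a + v ^ 2) ^ (j + 1)
noncomputable def kQ (z v : ℝ) : ℝ := z - v * (1 - Real.exp (-(2 * z / v))) / 2
noncomputable def kQ' (z v : ℝ) : ℝ := 1 - Real.exp (-(2 * z / v))
noncomputable def kE (z v : ℝ) : ℝ := 2 / v * Real.exp (-(2 * z / v))
noncomputable def kE' (z v : ℝ) : ℝ := -(4 / v ^ 2 * Real.exp (-(2 * z / v)))

lemma le_u0 {x C v : ℝ} (hv : 0 < v) (h : (1 + v) * x ≤ C) : x ≤ C * u0 v := by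
  unfold u0
  rw [mul_one_div, le_div_iff₀ (by positivity)]
  linarith

lemma kA_limit0 (y : ℝ) : Tendsto (kA y) (𝓝[>] 0) (𝓝 y) := by
  have h : HasDerivAt (fun v => Real.arctan (y * v)) y 0 := by
    have := ((hasDerivAt_id (0:ℝ)).const_mul y).arctan
    simpa using this
  have := h.tendsto_slope_zero_right
  refine this.congr' ?_
  filter_upwards [self_mem_nhdsWithin] with v hv
  simp [kA]; ring

lemma kA_nonneg {y v : ℝ} (hy : 0 < y) (hv : 0 < v) : 0 ≤ kA y v := by
  unfold kA
  have : 0 ≤ Real.arctan (y * v) := Real.arctan_nonneg.2 (by positivity)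
  positivity

lemma arctan_le_self' {x : ℝ} (hx : 0 ≤ x) : Real.arctan x ≤ x := by
  rcases hx.eq_or_lt with rfl | hx
  · simp
  by_contra hcon
  push Not at hcon
  have h1 := Real.lt_tan hx (hcon.trans (Real.arctan_lt_pi_div_two x))
  have h2 : Real.tan x < Real.tan (Real.arctan x) :=
    Real.tan_lt_tan_of_lt_of_lt_pi_div_two (by linarith [Real.pi_pos])
      (Real.arctan_lt_pi_div_two x) hcon
  rw [Real.tan_arctan] at h2
  linarith

lemma adm_kA {y : ℝ} (hy : 0 < y) : Adm (kA y) := by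
  refine ⟨?_, ⟨y + Real.pi / 2, fun v hv => ?_⟩, y, kA_limit0 y⟩
  · unfold kA
    refine ContinuousOn.div (by fun_prop) (by fun_prop) (fun v hv => (ne_of_gt hv))
  · rw [abs_of_nonneg (kA_nonneg hy hv)]
    refine le_u0 hv ?_
    unfold kA
    have h1 := arctan_le_self' (show 0 ≤ y * v by positivity)
    have h2 := Real.arctan_lt_pi_div_two (y * v)
    rw [← mul_div_assoc, div_le_iff₀ hv]
    nlinarith

lemma one_add_le {a v : ℝ} (ha : 0 < a) : 1 + v ≤ (2 / a + 1) * (a + v ^ 2) := by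
  have : (2 / a + 1) * (a + v ^ 2) = 2 + a + v ^ 2 + 2 * (v ^ 2 / a) := by field_simp; ring
  rw [this]
  have : 0 ≤ v ^ 2 / a := by positivity
  nlinarith [sq_nonneg (v - 1/2)]

lemma kB_bound {y v : ℝ} (hy : 0 < y) (hv : 0 < v) :
    |kB y v| ≤ ((2 / (1/y^2) + 1) / y ^ 2) * u0 v := by
  have : 0 < kB y v := by unfold kB; positivity
  rw [abs_of_pos this]
  refine le_u0 hv ?_
  unfold kB
  rw [mul_one_div, div_le_iff₀ (by positivity)]
  have h := one_add_le (v := v) (show 0 < 1 / y^2 by positivity)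
  have e : (2 / (1/y^2) + 1) / y ^ 2 * (1 + (y * v) ^ 2) = (2 / (1/y^2) + 1) * (1/y^2 + v ^ 2) := by
    field_simp
  rw [e]; exact h

lemma adm_kB {y : ℝ} (hy : 0 < y) : Adm (kB y) := by
  have hc : Continuous (kB y) := by
    unfold kB
    exact continuous_const.div (by fun_prop) (fun v => by positivity)
  exact ⟨hc.continuousOn, ⟨_, fun v hv => kB_bound hy hv⟩, _, (hc.tendsto 0).mono_left nhdsWithin_le_nhds⟩

lemma kD_bound (j : ℕ) {a v : ℝ} (ha : 0 < a) (hv : 0 < v) :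
    |kD j a v| ≤ ((2 / a + 1) / a ^ j) * u0 v := by
  have : 0 < kD j a v := by unfold kD; positivity
  rw [abs_of_pos this]
  refine le_u0 hv ?_
  unfold kD
  rw [mul_one_div, div_le_div_iff₀ (by positivity) (by positivity), pow_succ']
  have h := one_add_le (v := v) ha
  have h2 : a ^ j ≤ (a + v ^ 2) ^ j := by
    apply pow_le_pow_left₀ ha.le; nlinarith
  rw [← mul_assoc]
  exact mul_le_mul h h2 (by positivity) (by positivity)

lemma adm_kD (j : ℕ) {a : ℝ} (ha : 0 < a) : Adm (kD j a) := by
  have hc : Continuous (kD j a) := by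
    unfold kD
    exact continuous_const.div (by fun_prop) (fun v => by positivity)
  exact ⟨hc.continuousOn, ⟨_, fun v hv => kD_bound j ha hv⟩, _, (hc.tendsto 0).mono_left nhdsWithin_le_nhds⟩

lemma exp_lim0 (n : ℕ) {z : ℝ} (hz : 0 < z) :
    Tendsto (fun v : ℝ => (1 / v) ^ n * Real.exp (-(2 * z / v))) (𝓝[>] 0) (𝓝 0) := by
  have h := Real.tendsto_pow_mul_exp_neg_atTop_nhds_zero n
  have h1 : Tendsto (fun v : ℝ => 2 * z / v) (𝓝[>] 0) atTop := by
    simp only [div_eq_mul_inv]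
    exact tendsto_inv_nhdsGT_zero.const_mul_atTop (by positivity)
  have h2 := (h.comp h1).const_mul (1 / (2 * z) ^ n)
  rw [mul_zero] at h2
  refine h2.congr' ?_
  filter_upwards [self_mem_nhdsWithin] with v hv
  have hv : 0 < v := hv
  simp only [Function.comp]
  rw [div_pow, one_div_pow]
  field_simp

lemma exp_bd1 {z a : ℝ} (hz : 0 < z) (ha : 0 < a) : a * Real.exp (-(2 * z * a)) ≤ 1 / (2 * z) := by
  have := Real.add_one_le_exp (2 * z * a)
  rw [Real.exp_neg, ← div_eq_mul_inv, div_le_div_iff₀ (Real.exp_pos _) (by positivity)]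
  nlinarith

lemma exp_bd2 {z a : ℝ} (hz : 0 < z) (ha : 0 < a) :
    a ^ 2 * Real.exp (-(2 * z * a)) ≤ 1 / (2 * z ^ 2) := by
  have := Real.quadratic_le_exp_of_nonneg (show 0 ≤ 2 * z * a by positivity)
  rw [Real.exp_neg, ← div_eq_mul_inv, div_le_div_iff₀ (Real.exp_pos _) (by positivity)]
  nlinarith [mul_pos hz ha]

lemma kE_bound {z v : ℝ} (hz : 0 < z) (hv : 0 < v) : |kE z v| ≤ (1 / z + 2) * u0 v := by
  have : 0 < kE z v := by unfold kE; positivity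
  rw [abs_of_pos this]
  refine le_u0 hv ?_
  unfold kE
  have h1 := exp_bd1 hz (inv_pos.2 hv)
  have h2 : Real.exp (-(2 * z / v)) ≤ 1 := Real.exp_le_one_iff.2 (by
    have : 0 < 2 * z / v := by positivity
    linarith)
  have e : (1 + v) * (2 / v * Real.exp (-(2 * z / v))) =
    2 * (v⁻¹ * Real.exp (-(2 * z * v⁻¹))) + 2 * Real.exp (-(2 * z / v)) := by
    rw [← div_eq_mul_inv (2 * z)]; field_simp
  rw [e]
  have : 2 * (1 / (2 * z)) = 1 / z := by field_simp
  linarith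

lemma adm_kE {z : ℝ} (hz : 0 < z) : Adm (kE z) := by
  refine ⟨?_, ⟨_, fun v hv => kE_bound hz hv⟩, 0, ?_⟩
  · unfold kE
    have : ∀ v ∈ Ioi (0:ℝ), v ≠ 0 := fun v hv => ne_of_gt hv
    fun_prop (disch := assumption)
  · have := (exp_lim0 1 hz).const_mul 2
    rw [mul_zero] at this
    refine this.congr fun v => ?_
    unfold kE; ring

lemma kE'_bound {z v : ℝ} (hz : 0 < z) (hv : 0 < v) :
    |kE' z v| ≤ (4 * (1 / (2 * z ^ 2)) + 4 * (1 / (2 * z))) * u0 v := by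
  have : 0 < 4 / v ^ 2 * Real.exp (-(2 * z / v)) := by positivity
  unfold kE'
  rw [abs_neg, abs_of_pos this]
  refine le_u0 hv ?_
  have h1 := exp_bd1 hz (inv_pos.2 hv)
  have h2 := exp_bd2 hz (inv_pos.2 hv)
  have e : (1 + v) * (4 / v ^ 2 * Real.exp (-(2 * z / v))) =
    4 * (v⁻¹ ^ 2 * Real.exp (-(2 * z * v⁻¹))) + 4 * (v⁻¹ * Real.exp (-(2 * z * v⁻¹))) := by
    rw [← div_eq_mul_inv (2 * z)]; field_simp
  rw [e]
  linarith

lemma one_sub_exp_bd {b : ℝ} (hb : 0 ≤ b) : 0 ≤ 1 - Real.exp (-b) ∧ 1 - Real.exp (-b) ≤ 1 ∧ 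
    1 - Real.exp (-b) ≤ b := by
  have := Real.add_one_le_exp (-b)
  have := Real.exp_pos (-b)
  have : Real.exp (-b) ≤ 1 := Real.exp_le_one_iff.2 (by linarith)
  refine ⟨?_, ?_, ?_⟩ <;> linarith

lemma adm_kQ' {z : ℝ} (hz : 0 < z) : Adm (kQ' z) := by
  refine ⟨?_, ⟨1 + 2 * z, fun v hv => ?_⟩, 1, ?_⟩
  · unfold kQ'
    have : ∀ v ∈ Ioi (0:ℝ), v ≠ 0 := fun v hv => ne_of_gt hv
    fun_prop (disch := assumption)
  · unfold kQ'
    obtain ⟨h1, h2, h3⟩ := one_sub_exp_bd (show 0 ≤ 2 * z / v by positivity)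
    rw [abs_of_nonneg h1]
    refine le_u0 hv ?_
    have : v * (2 * z / v) = 2 * z := by field_simp
    nlinarith
  · have := (exp_lim0 0 hz).const_sub 1
    rw [sub_zero] at this
    refine this.congr fun v => ?_
    unfold kQ'; ring

lemma exp_le_quad {b : ℝ} (hb : 0 ≤ b) : Real.exp (-b) ≤ 1 - b + b ^ 2 / 2 := by
  have h := Real.quadratic_le_exp_of_nonneg hb
  rw [Real.exp_neg, inv_le_iff_one_le_mul₀ (Real.exp_pos _)]
  have : 0 < 1 - b + b ^ 2 / 2 := by nlinarith [sq_nonneg (b - 1)]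
  nlinarith [sq_nonneg (b^2)]

lemma kQ_bounds {z v : ℝ} (hz : 0 < z) (hv : 0 < v) :
    0 ≤ kQ z v ∧ kQ z v ≤ z ∧ v * kQ z v ≤ z ^ 2 := by
  have hb : 0 ≤ 2 * z / v := by positivity
  obtain ⟨h1, h2, h3⟩ := one_sub_exp_bd hb
  have h4 := exp_le_quad hb
  have e : v * (2 * z / v) = 2 * z := by field_simp
  unfold kQ
  refine ⟨?_, ?_, ?_⟩
  · nlinarith
  · nlinarith
  · have e2 : v * (z - v * (1 - Real.exp (-(2 * z / v))) / 2)
      = z * v - v ^ 2 * (1 - Real.exp (-(2 * z / v))) / 2 := by ring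
    have : v ^ 2 * (1 - Real.exp (-(2 * z / v))) ≥ v ^ 2 * (2 * z / v - (2 * z / v) ^ 2 / 2) := by
      apply mul_le_mul_of_nonneg_left _ (by positivity); linarith
    have e3 : v ^ 2 * (2 * z / v - (2 * z / v) ^ 2 / 2) = 2 * z * v - 2 * z ^ 2 := by
      field_simp
    rw [e2]; linarith

lemma kQ_lim0 {z : ℝ} (hz : 0 < z) : Tendsto (kQ z) (𝓝[>] 0) (𝓝 z) := by
  have h1 := (exp_lim0 0 hz).const_sub 1
  rw [sub_zero] at h1
  have h2 : Tendsto (fun v : ℝ => v) (𝓝[>] 0) (𝓝 0) := tendsto_id.mono_left nhdsWithin_le_nhds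
  have := ((h2.mul h1).div_const 2).const_sub z
  simp only [zero_mul, zero_div, sub_zero] at this
  refine this.congr fun v => ?_
  unfold kQ; ring

lemma adm_kQ {z : ℝ} (hz : 0 < z) : Adm (kQ z) := by
  refine ⟨?_, ⟨z + z ^ 2, fun v hv => ?_⟩, z, kQ_lim0 hz⟩
  · unfold kQ
    have : ∀ v ∈ Ioi (0:ℝ), v ≠ 0 := fun v hv => ne_of_gt hv
    fun_prop (disch := assumption)
  · obtain ⟨h1, h2, h3⟩ := kQ_bounds hz hv
    rw [abs_of_nonneg h1]
    refine le_u0 hv ?_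
    linarith

lemma kQ_lower {v : ℝ} (hv : 0 < v) : u0 v ≤ 2 * kQ 1 v := by
  unfold kQ u0
  set b := 2 / v with hb
  have hb0 : 0 < b := by positivity
  have hvb : v = 2 / b := by rw [hb]; field_simp
  have hb2 : 2 * 1 / v = b := by rw [hb]; ring
  rw [hb2, hvb]
  have hm : b ^ 2 / (2 + b) ≤ 2 * (b - 1 + Real.exp (-b)) := by
    rw [div_le_iff₀ (by positivity)]
    rcases le_or_gt b 2 with h | h
    · have h5 := Real.add_one_le_exp (-b/2)
      have h6 : Real.exp (-b) = Real.exp (-b/2) ^ 2 := by rw [← Real.exp_nat_mul]; congr 1; push_cast; ring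
      have h7 : (-b/2+1)^2 ≤ Real.exp (-b) := by
        rw [h6]; apply pow_le_pow_left₀ _ h5; linarith
      nlinarith [pow_pos hb0 2, pow_pos hb0 3]
    · nlinarith [Real.exp_pos (-b)]
  have e1 : 1 / (1 + 2 / b) = b ^ 2 / (2 + b) / b := by field_simp; ring
  have e2 : 2 * (1 - 2 / b * (1 - Real.exp (-b)) / 2) = 2 * (b - 1 + Real.exp (-b)) / b := by
    field_simp; ring
  rw [e1, e2]
  gcongr

lemma kA_lower {v : ℝ} (hv : 0 < v) : u0 v ≤ 2 * kA 1 v := by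
  unfold kA u0
  rw [one_mul, ← mul_div_assoc, div_le_div_iff₀ (by positivity) hv]
  suffices h : v / (1 + v) ≤ 2 * Real.arctan v by
    rw [div_le_iff₀ (by positivity)] at h; linarith
  have hm : v / (1 + v) ≤ Real.arctan v := by
    have hd : ∀ x ∈ Ici (0:ℝ), HasDerivAt (fun x => Real.arctan x - x / (1 + x))
        (1 / (1 + x^2) - (1 * (1 + x) - x * 1) / (1 + x)^2) x := by
      intro x hx
      have hx : 0 ≤ x := hx
      exact (Real.hasDerivAt_arctan x).sub
        ((hasDerivAt_id x).div ((hasDerivAt_id x).const_add 1) (by simp; positivity))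
    have := monotoneOn_of_deriv_nonneg (convex_Ici (0:ℝ))
      (fun x hx => (hd x hx).continuousAt.continuousWithinAt)
      (fun x hx => (hd x (interior_subset hx)).differentiableAt.differentiableWithinAt)
      (fun x hx => by
        have hx' : 0 ≤ x := interior_subset hx
        rw [(hd x (interior_subset hx)).deriv]
        have : (1 * (1 + x) - x * 1) / (1 + x)^2 ≤ 1 / (1 + x^2) := by
          rw [div_le_div_iff₀ (by positivity) (by positivity)]
          nlinarith
        linarith)
    have := this (show (0:ℝ) ∈ Ici 0 by simp) (show v ∈ Ici 0 from hv.le) hv.le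
    simp at this
    exact this
  have : 0 ≤ v / (1+v) := by positivity
  linarith

lemma kQ_limTop : Tendsto (fun v => v * kQ 1 v) atTop (𝓝 1) := by
  -- 1 - C/v ≤ v kQ ≤ 1
  have hlow : Tendsto (fun v : ℝ => 1 - 2 * v⁻¹) atTop (𝓝 1) := by
    have := (tendsto_inv_atTop_zero (𝕜 := ℝ)).const_mul 2 |>.const_sub 1
    simpa using this
  refine tendsto_of_tendsto_of_tendsto_of_le_of_le' hlow tendsto_const_nhds ?_ ?_
  · filter_upwards [eventually_ge_atTop 2] with v hv
    have hv0 : 0 < v := by linarith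
    have hb1 : |-(2 / v)| ≤ 1 := by
      rw [abs_neg, abs_of_pos (by positivity), div_le_one hv0]; exact hv
    have h := Real.exp_bound hb1 (n := 3) (by norm_num)
    rw [abs_neg, abs_of_pos (show 0 < 2 / v by positivity)] at h
    simp [Finset.sum_range_succ, Nat.factorial] at h
    have h' := (abs_le.1 h).1
    unfold kQ
    set b := 2 / v with hb
    have hvb : v * b = 2 := by rw [hb]; field_simp
    have hi : v⁻¹ = b / 2 := by rw [hb]; field_simp
    rw [hi, show 2 * 1 / v = b by rw [hb]; ring]
    have e : v * (1 - v * (1 - Real.exp (-b)) / 2) = v ^ 2 / 2 * (b - 1 + Real.exp (-b)) := by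
      linear_combination (-v / 2) * hvb
    rw [e]
    have : v ^ 2 / 2 * (b ^ 2 / 2 - b ^ 3 * (4 / (6 * 3))) ≤ v ^ 2 / 2 * (b - 1 + Real.exp (-b)) := by
      gcongr; linarith
    refine le_trans ?_ this
    have : v ^ 2 / 2 * (b ^ 2 / 2 - b ^ 3 * (4 / (6 * 3))) = 1 - b * (4/9) := by
      have h2 : v ^ 2 * b ^ 2 = 4 := by rw [← mul_pow, hvb]; norm_num
      linear_combination (1/4 - b / 9) * h2
    rw [this]
    have : 0 < b := by positivity
    linarith
  · filter_upwards [eventually_gt_atTop 0] with v hv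
    have := (kQ_bounds one_pos hv).2.2
    linarith


/-! Derivative facts. -/
lemma deriv_kA {v : ℝ} (hv : 0 < v) (z : ℝ) : HasDerivAt (fun z => kA z v) (kB z v) z := by
  have h := (((hasDerivAt_id z).mul_const v).arctan).div_const v
  unfold kA kB
  refine h.congr_deriv ?_
  simp; field_simp

lemma deriv_kB (z v : ℝ) : HasDerivAt (fun z => kB z v)
    (-(2 * z * v ^ 2) / (1 + (z * v) ^ 2) ^ 2) z := by
  have h := (((((hasDerivAt_id z).mul_const v).pow 2).const_add 1)).inv (by simp; positivity)
  unfold kB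
  simp only [one_div]
  refine h.congr_deriv ?_
  simp; ring

lemma deriv_kD (j : ℕ) {v : ℝ} {z : ℝ} (hz : 0 < z) :
    HasDerivAt (fun z => kD j z v) (-(j + 1) * kD (j + 1) z v) z := by
  have hp : 0 < z + v ^ 2 := by positivity
  have h := (((hasDerivAt_id z).add_const (v ^ 2)).pow (j+1)).inv (by simp; positivity)
  unfold kD
  simp only [one_div]
  refine h.congr_deriv ?_
  simp; field_simp; ring

lemma deriv_exp_aux {v : ℝ} (z : ℝ) :
    HasDerivAt (fun z => Real.exp (-(2 * z / v))) (Real.exp (-(2 * z / v)) * (-(2 / v))) z := by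
  have h := ((((hasDerivAt_id z).const_mul 2).div_const v).neg).exp
  simpa using h

lemma deriv_kQ {v : ℝ} (hv : 0 < v) (z : ℝ) : HasDerivAt (fun z => kQ z v) (kQ' z v) z := by
  have h := (hasDerivAt_id z).sub ((((deriv_exp_aux (v := v) z).const_sub 1).const_mul v).div_const 2)
  unfold kQ kQ'
  refine h.congr_deriv ?_
  field_simp

lemma deriv_kQ' {v : ℝ} (z : ℝ) : HasDerivAt (fun z => kQ' z v) (kE z v) z := by
  have h := (deriv_exp_aux (v := v) z).const_sub 1
  unfold kE kQ'
  refine h.congr_deriv ?_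
  ring

lemma deriv_kE {v : ℝ} (z : ℝ) : HasDerivAt (fun z => kE z v) (kE' z v) z := by
  have h := (deriv_exp_aux (v := v) z).const_mul (2 / v)
  unfold kE kE'
  refine h.congr_deriv ?_
  ring

lemma bound_A'' {y z v : ℝ} (hy : 0 < y) (hz : z ∈ Icc y (y+1)) (hv : 0 < v) :
    |-(2 * z * v ^ 2) / (1 + (z * v) ^ 2) ^ 2| ≤ (2 / y * ((2 / (1/y^2) + 1) / y ^ 2)) * u0 v := by
  have hz0 : 0 < z := hy.trans_le hz.1
  have h1 : |-(2 * z * v ^ 2) / (1 + (z * v) ^ 2) ^ 2| ≤ 2 / y * kB y v := by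
    rw [neg_div, abs_neg, abs_of_pos (by positivity)]
    unfold kB
    rw [div_mul_div_comm, mul_one, div_le_div_iff₀ (by positivity) (by positivity)]
    have a1 : 1 + (y * v) ^ 2 ≤ 1 + (z * v) ^ 2 := by
      have := hz.1
      gcongr
    have a2 : z * v ^ 2 * y ≤ 1 + (z * v) ^ 2 := by
      have : z * v ^ 2 * y ≤ z * v ^ 2 * z := by
        have := hz.1
        gcongr
      nlinarith
    calc 2 * z * v ^ 2 * (y * (1 + (y * v) ^ 2)) = 2 * ((z * v ^ 2 * y) * (1 + (y * v) ^ 2)) := by ring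
      _ ≤ 2 * ((1 + (z * v) ^ 2) * (1 + (z * v) ^ 2)) := by gcongr
      _ = _ := by ring
  have h2 := kB_bound hy hv
  rw [abs_of_pos (by unfold kB; positivity)] at h2
  calc _ ≤ 2 / y * kB y v := h1
    _ ≤ 2 / y * (((2 / (1/y^2) + 1) / y ^ 2) * u0 v) := by gcongr
    _ = _ := by ring

lemma bound_E {y z v : ℝ} (hy : 0 < y) (hz : z ∈ Icc y (y+1)) (hv : 0 < v) :
    |kE z v| ≤ (1 / y + 2) * u0 v := by
  have hz0 : 0 < z := hy.trans_le hz.1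
  refine (kE_bound hz0 hv).trans ?_
  have := u0_pos hv
  have := hz.1
  gcongr

lemma bound_E' {y z v : ℝ} (hy : 0 < y) (hz : z ∈ Icc y (y+1)) (hv : 0 < v) :
    |kE' z v| ≤ (4 * (1 / (2 * y ^ 2)) + 4 * (1 / (2 * y))) * u0 v := by
  have hz0 : 0 < z := hy.trans_le hz.1
  refine (kE'_bound hz0 hv).trans ?_
  have := u0_pos hv
  have := hz.1
  gcongr

section
variable {L : ℝ → (ℝ → ℝ) → ℝ} {Λ : (ℝ → ℝ) → ℝ} {K : ℝ}

lemma cls_kB (hΛ : BFun Λ K) (hL : ∀ᶠ T in atTop, BFun (L T) K)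
    (hA : ∀ y > 0, Cls L Λ (kA y)) (y : ℝ) (hy : 0 < y) : Cls L Λ (kB y) :=
  Cls.deriv hΛ hL kA kB (fun z v => -(2 * z * v ^ 2) / (1 + (z * v) ^ 2) ^ 2) y _
    (fun v hv z _ => deriv_kA hv z) (fun v _ z _ => deriv_kB z v)
    (fun v hv z hz => bound_A'' hy hz hv) (fun z hz => hA z (hy.trans_le hz.1)) (adm_kB hy)

lemma cls_kD (hΛ : BFun Λ K) (hL : ∀ᶠ T in atTop, BFun (L T) K)
    (hA : ∀ y > 0, Cls L Λ (kA y)) (j : ℕ) : ∀ a > 0, Cls L Λ (kD j a) := by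
  induction j with
  | zero =>
    intro a ha
    have h := cls_kB hΛ hL hA (1 / √a) (by positivity)
    refine (h.lin hΛ hL (1/a) 0 h).congr hΛ hL (fun v hv => ?_)
    unfold kB kD
    rw [mul_pow, div_pow, Real.sq_sqrt ha.le]
    have : 0 < a + v ^ 2 := by positivity
    field_simp
    ring
  | succ j ih =>
    intro a ha
    have h := Cls.deriv hΛ hL (kD j) (fun z v => -(j+1) * kD (j+1) z v)
      (fun z v => -((j:ℝ) + 1) * (-(((j + 1 : ℕ) : ℝ) + 1) * kD (j + 1 + 1) z v)) a
      ((j + 1) * ((j + 1 : ℕ) + 1) * ((2 / a + 1) / a ^ (j + 1 + 1)))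
      (fun v hv z hz => deriv_kD j (ha.trans_le hz.1)) 
      (fun v hv z hz => (deriv_kD (j+1) (ha.trans_le hz.1)).const_mul _) ?_
      (fun z hz => ih z (ha.trans_le hz.1)) ?_
    · refine (h.lin hΛ hL (-1/(j+1)) 0 h).congr hΛ hL (fun v hv => ?_)
      have : (j:ℝ) + 1 ≠ 0 := by positivity
      field_simp
      ring
    · intro v hv z hz
      have hz0 := ha.trans_le hz.1
      have e : -((j:ℝ) + 1) * (-(((j + 1 : ℕ) : ℝ) + 1) * kD (j + 1 + 1) z v)
        = (((j:ℝ) + 1) * (((j + 1 : ℕ) : ℝ) + 1)) * kD (j + 1 + 1) z v := by ring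
      have hpos : 0 < ((j:ℝ) + 1) * (((j + 1 : ℕ) : ℝ) + 1) := by positivity
      rw [e, abs_mul, abs_of_pos hpos, mul_assoc (((j:ℝ) + 1) * (((j + 1 : ℕ) : ℝ) + 1))]
      refine mul_le_mul_of_nonneg_left ?_ (by positivity)
      refine (kD_bound (j+1+1) hz0 hv).trans ?_
      have := u0_pos hv
      have := hz.1
      gcongr
    · have h := adm_kD (j+1) ha
      exact (h.lin (-(j+1)) 0 h).congr (fun v hv => by ring)

lemma cls_polyD (hΛ : BFun Λ K) (hL : ∀ᶠ T in atTop, BFun (L T) K)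
    (hA : ∀ y > 0, Cls L Λ (kA y)) (p : Polynomial ℝ) :
    Cls L Λ (fun v => (1 / (1 + v ^ 2)) * p.eval (1 / (1 + v ^ 2))) := by
  induction p using Polynomial.induction_on' with
  | add p q hp hq =>
    refine (hp.lin hΛ hL 1 1 hq).congr hΛ hL (fun v hv => ?_)
    simp; ring
  | monomial n a =>
    have h := cls_kD hΛ hL hA n 1 one_pos
    refine (h.lin hΛ hL a 0 h).congr hΛ hL (fun v hv => ?_)
    simp only [kD, Polynomial.eval_monomial, one_div, inv_pow, pow_succ, mul_inv]
    ring

lemma cls_polyE (hΛ : BFun Λ K) (hL : ∀ᶠ T in atTop, BFun (L T) K)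
    (hE : ∀ y > 0, Cls L Λ (kE y)) (p : Polynomial ℝ) :
    Cls L Λ (fun v => (1 / v) * (Real.exp (-(1 / v)) * p.eval (Real.exp (-(1 / v))))) := by
  induction p using Polynomial.induction_on' with
  | add p q hp hq =>
    refine (hp.lin hΛ hL 1 1 hq).congr hΛ hL (fun v hv => ?_)
    simp; ring
  | monomial n a =>
    have h := hE ((n + 1) / 2) (by positivity)
    refine (h.lin hΛ hL (a/2) 0 h).congr hΛ hL (fun v hv => ?_)
    simp only [kE, Polynomial.eval_monomial]
    rw [← Real.exp_nat_mul]
    have : Real.exp (-(2 * ((n + 1) / 2) / v)) = Real.exp (-(1 / v)) * Real.exp (n * -(1/v)) := by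
      rw [← Real.exp_add]; congr 1; ring
    rw [this]; ring

lemma cls_kE (hΛ : BFun Λ K) (hL : ∀ᶠ T in atTop, BFun (L T) K)
    (hQ : ∀ y > 0, Cls L Λ (kQ y)) (y : ℝ) (hy : 0 < y) : Cls L Λ (kE y) := by
  have h1 : ∀ y > 0, Cls L Λ (kQ' y) := fun y hy =>
    Cls.deriv hΛ hL kQ kQ' kE y _
      (fun v hv z _ => deriv_kQ hv z) (fun v _ z _ => deriv_kQ' z)
      (fun v hv z hz => bound_E hy hz hv) (fun z hz => hQ z (hy.trans_le hz.1)) (adm_kQ' hy)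
  exact Cls.deriv hΛ hL kQ' kE kE' y _
      (fun v hv z _ => deriv_kQ' z) (fun v _ z _ => deriv_kE z)
      (fun v hv z hz => bound_E' hy hz hv) (fun z hz => h1 z (hy.trans_le hz.1)) (adm_kE hy)

lemma arctan_limTop : Tendsto (fun v => v * kA 1 v) atTop (𝓝 (Real.pi / 2)) := by
  have := Real.tendsto_arctan_atTop.mono_right (nhdsWithin_le_nhds)
  refine this.congr' ?_
  filter_upwards [eventually_gt_atTop 0] with v hv
  simp [kA]; field_simp

/-- Tauberian step from the arctangent kernel. -/
lemma cls_A_to_Q (hΛ : BFun Λ K) (hL : ∀ᶠ T in atTop, BFun (L T) K)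
    (hA : ∀ y > 0, Cls L Λ (kA y)) : Cls L Λ (kQ 1) := by
  set r : ℝ → ℝ := fun v => 1 * kQ 1 v + (-(2 / Real.pi)) * kA 1 v with hr
  have hpi := Real.pi_pos
  have hrA : Adm r := (adm_kQ one_pos).lin _ _ (adm_kA one_pos)
  suffices h : Cls L Λ r by
    refine (h.lin hΛ hL 1 (2 / Real.pi) (hA 1 one_pos)).congr hΛ hL (fun v hv => ?_)
    simp only [hr]; ring
  have hrtop : Tendsto (fun v => v * r v) atTop (𝓝 0) := by
    have := (kQ_limTop.const_mul 1).add (arctan_limTop.const_mul (-(2 / Real.pi)))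
    rw [show 1 * 1 + -(2 / Real.pi) * (Real.pi / 2) = 0 by field_simp; norm_num] at this
    refine this.congr fun v => ?_
    simp only [hr]; ring
  have hrtop' : Tendsto r atTop (𝓝 0) := by
    have := hrtop.mul tendsto_inv_atTop_zero
    rw [zero_mul] at this
    refine this.congr' ?_
    filter_upwards [eventually_gt_atTop 0] with v hv
    field_simp
  obtain ⟨c0, hc0⟩ := hrA.2.2
  -- change of variables
  set V : ℝ → ℝ := fun x => √(1 / x - 1) with hV
  have hVpos : ∀ x ∈ Ioo (0:ℝ) 1, 0 < V x := fun x hx => by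
    apply Real.sqrt_pos.2
    have := one_lt_one_div hx.1 hx.2
    linarith
  have hVsq : ∀ x ∈ Ioo (0:ℝ) 1, 1 / (1 + V x ^ 2) = x := fun x hx => by
    have := one_lt_one_div hx.1 hx.2
    rw [hV]
    simp only
    rw [Real.sq_sqrt (by linarith)]
    have := hx.1
    field_simp
    ring
  have hVcont : ContinuousOn V (Ioo 0 1) := by
    have : ∀ x ∈ Ioo (0:ℝ) 1, x ≠ 0 := fun x hx => hx.1.ne'
    simp only [hV]
    fun_prop (disch := assumption)
  have hV0 : Tendsto V (𝓝[>] 0) atTop := by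
    refine Real.tendsto_sqrt_atTop.comp ?_
    have := tendsto_atTop_add_const_right _ (-1) (tendsto_inv_nhdsGT_zero (𝕜 := ℝ))
    refine this.congr fun x => by ring
  have hV1 : Tendsto V (𝓝[<] 1) (𝓝[>] 0) := by
    rw [tendsto_nhdsWithin_iff]
    constructor
    · have : ContinuousAt V 1 := by
        simp only [hV]
        have : (1:ℝ) ≠ 0 := one_ne_zero
        fun_prop (disch := assumption)
      have h := this.tendsto
      simp only [hV] at h
      simp only [ne_eq, one_ne_zero, not_false_eq_true, div_self, sub_self, Real.sqrt_zero] at h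
      exact h.mono_left nhdsWithin_le_nhds
    · filter_upwards [Ioo_mem_nhdsLT (zero_lt_one' ℝ)] with x hx using hVpos x hx
  refine Cls.closed hΛ hL hrA (fun ε hε => ?_)
  have H1 : ∀ x ∈ Ioo (0:ℝ) 1, x ≤ 3 * u0 (V x) := by
    intro x hx
    have h1 := hVsq x hx
    have h2 := hVpos x hx
    nth_rewrite 1 [← h1]
    refine le_u0 h2 ?_
    have := one_add_le (v := V x) one_pos
    rw [mul_one_div, div_le_iff₀ (by positivity)]
    linarith
  have H2 : ∀ ε > 0, ∃ δ > 0, ∀ x ∈ Ioo (0:ℝ) 1, x < δ → |r (V x)| ≤ ε * u0 (V x) := by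
    intro δ hδ
    have h1 : Tendsto (fun v => (1 + v) * r v) atTop (𝓝 0) := by
      have := hrtop'.add hrtop
      rw [zero_add] at this
      refine this.congr fun v => by ring
    have h2 := ((Metric.tendsto_nhds.1 (h1.comp hV0)) δ hδ)
    rw [eventually_nhdsWithin_iff, Metric.eventually_nhds_iff] at h2
    obtain ⟨η, hη, h2⟩ := h2
    refine ⟨η, hη, fun x hx hxη => ?_⟩
    have h3 := h2 (y := x) (by rw [Real.dist_eq, sub_zero, abs_of_pos hx.1]; exact hxη) hx.1
    have hvp := hVpos x hx
    simp only [Function.comp, Real.dist_eq, sub_zero, abs_mul] at h3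
    rw [abs_of_pos (by linarith)] at h3
    exact le_u0 hvp h3.le
  obtain ⟨p, hp⟩ := weier (fun x => r (V x)) (fun x => u0 (V x)) 3 c0 (by norm_num)
    (hrA.1.comp hVcont (fun x hx => hVpos x hx)) H1 H2 (hrtop'.comp hV0) (hc0.comp hV1) ε hε
  refine ⟨_, cls_polyD hΛ hL hA p, fun v hv => ?_⟩
  have hx : 1 / (1 + v ^ 2) ∈ Ioo (0:ℝ) 1 := by
    refine ⟨by positivity, ?_⟩
    rw [div_lt_one (by positivity)]
    have : 0 < v ^ 2 := by positivity
    linarith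
  have := hp _ hx
  have hVv : V (1 / (1 + v ^ 2)) = v := by
    simp only [hV, one_div, inv_inv]
    rw [add_sub_cancel_left, Real.sqrt_sq hv.le]
  simpa only [hVv] using this

/-- Tauberian step from the variance kernel. -/
lemma cls_Q_to_A (hΛ : BFun Λ K) (hL : ∀ᶠ T in atTop, BFun (L T) K)
    (hQ : ∀ y > 0, Cls L Λ (kQ y)) : Cls L Λ (kA 1) := by
  set r : ℝ → ℝ := fun v => 1 * kA 1 v + (-1) * kQ 1 v with hr
  have hrA : Adm r := (adm_kA one_pos).lin _ _ (adm_kQ one_pos)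
  suffices h : Cls L Λ r by
    refine (h.lin hΛ hL 1 1 (hQ 1 one_pos)).congr hΛ hL (fun v hv => ?_)
    simp only [hr]; ring
  have hr0 : Tendsto r (𝓝[>] 0) (𝓝 0) := by
    have := ((kA_limit0 1).const_mul 1).add ((kQ_lim0 one_pos).const_mul (-1))
    rwa [show (1:ℝ) * 1 + (-1) * 1 = 0 by norm_num] at this
  have hrtop : Tendsto (fun v => v * r v) atTop (𝓝 (1 * (Real.pi / 2) + (-1) * 1)) := by
    refine ((arctan_limTop.const_mul 1).add (kQ_limTop.const_mul (-1))).congr fun v => ?_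
    simp only [hr]; ring
  set V : ℝ → ℝ := fun x => 1 / (-Real.log x) with hV
  have hlog : ∀ x ∈ Ioo (0:ℝ) 1, 0 < - Real.log x := fun x hx => by
    have := Real.log_neg hx.1 hx.2
    linarith
  have hVpos : ∀ x ∈ Ioo (0:ℝ) 1, 0 < V x := fun x hx => by
    have := hlog x hx
    simp only [hV]; positivity
  have hVcont : ContinuousOn V (Ioo 0 1) := by
    have h1 : ∀ x ∈ Ioo (0:ℝ) 1, x ≠ 0 := fun x hx => hx.1.ne'
    have h2 : ∀ x ∈ Ioo (0:ℝ) 1, -Real.log x ≠ 0 := fun x hx => (hlog x hx).ne'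
    simp only [hV]
    fun_prop (disch := assumption)
  have hV0 : Tendsto V (𝓝[>] 0) (𝓝[>] 0) := by
    have h1 : Tendsto (fun x => - Real.log x) (𝓝[>] 0) atTop :=
      tendsto_neg_atBot_atTop.comp Real.tendsto_log_nhdsGT_zero
    refine (tendsto_inv_atTop_nhdsGT_zero.comp h1).congr fun x => by simp [hV]
  have hV1 : Tendsto V (𝓝[<] 1) atTop := by
    have h1 : Tendsto (fun x => - Real.log x) (𝓝[<] 1) (𝓝[>] 0) := by
      rw [tendsto_nhdsWithin_iff]
      constructor
      · have : ContinuousAt (fun x => - Real.log x) 1 := (Real.continuousAt_log one_ne_zero).neg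
        have h := this.tendsto
        simp only [Real.log_one, neg_zero] at h
        exact h.mono_left nhdsWithin_le_nhds
      · filter_upwards [Ioo_mem_nhdsLT (zero_lt_one' ℝ)] with x hx using hlog x hx
    refine (tendsto_inv_nhdsGT_zero.comp h1).congr fun x => by simp [hV]
  refine Cls.closed hΛ hL hrA (fun ε hε => ?_)
  have hid : Tendsto (fun v : ℝ => v) (𝓝[>] 0) (𝓝 0) := tendsto_id.mono_left nhdsWithin_le_nhds
  have hs0 : Tendsto (fun v => v * r v) (𝓝[>] 0) (𝓝 0) := by
    have := hid.mul hr0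
    rwa [zero_mul] at this
  have hsc : ContinuousOn (fun v => v * r v) (Ioi 0) := continuousOn_id.mul hrA.1
  have H1 : ∀ x ∈ Ioo (0:ℝ) 1, x ≤ 1 * (V x * u0 (V x)) := by
    intro x hx
    have hv := hVpos x hx
    have hl := hlog x hx
    have h1 := Real.one_sub_inv_le_log_of_pos hx.1
    simp only [u0, hV, one_mul]
    have e : 1 / -Real.log x * (1 / (1 + 1 / -Real.log x)) = 1 / (1 + -Real.log x) := by
      generalize -Real.log x = b at hl
      field_simp
      ring
    rw [e, le_div_iff₀ (by linarith)]
    have := mul_le_mul_of_nonneg_left h1 hx.1.le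
    rw [mul_sub, mul_inv_cancel₀ hx.1.ne'] at this
    linarith
  have H2 : ∀ ε > 0, ∃ δ > 0, ∀ x ∈ Ioo (0:ℝ) 1, x < δ → |V x * r (V x)| ≤ ε * (V x * u0 (V x)) := by
    intro δ hδ
    have h1 : Tendsto (fun v => (1 + v) * r v) (𝓝[>] 0) (𝓝 0) := by
      have := hr0.add hs0
      rw [zero_add] at this
      refine this.congr fun v => by ring
    have h2 := ((Metric.tendsto_nhds.1 (h1.comp hV0)) δ hδ)
    rw [eventually_nhdsWithin_iff, Metric.eventually_nhds_iff] at h2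
    obtain ⟨η, hη, h2⟩ := h2
    refine ⟨η, hη, fun x hx hxη => ?_⟩
    have h3 := h2 (y := x) (by rw [Real.dist_eq, sub_zero, abs_of_pos hx.1]; exact hxη) hx.1
    have hvp := hVpos x hx
    simp only [Function.comp, Real.dist_eq, sub_zero, abs_mul] at h3
    rw [abs_of_pos (by linarith)] at h3
    have h4 := le_u0 hvp h3.le
    rw [abs_mul, abs_of_pos hvp]
    calc _ ≤ V x * (δ * u0 (V x)) := by gcongr
      _ = _ := by ring
  obtain ⟨p, hp⟩ := weier (fun x => V x * r (V x)) (fun x => V x * u0 (V x)) 1 _ (by norm_num)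
    (hsc.comp hVcont (fun x hx => hVpos x hx)) H1 H2 (hs0.comp hV0) (hrtop.comp hV1) ε hε
  refine ⟨_, cls_polyE hΛ hL (cls_kE hΛ hL hQ) p, fun v hv => ?_⟩
  have hv1 : 0 < 1 / v := by positivity
  have hx : Real.exp (-(1 / v)) ∈ Ioo (0:ℝ) 1 :=
    ⟨Real.exp_pos _, Real.exp_lt_one_iff.2 (by linarith)⟩
  have := hp _ hx
  have hVv : V (Real.exp (-(1 / v))) = v := by
    simp [hV]
  simp only [hVv] at this
  have e : r v - 1 / v * (Real.exp (-(1 / v)) * Polynomial.eval (Real.exp (-(1 / v))) p)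
    = (1 / v) * (v * r v - Real.exp (-(1 / v)) * Polynomial.eval (Real.exp (-(1 / v))) p) := by
    field_simp
  rw [e, abs_mul, abs_of_pos hv1]
  calc _ ≤ 1 / v * (ε * (v * u0 v)) := by gcongr
    _ = _ := by field_simp

end


noncomputable def Lam (ρ : ℝ) (g : ℝ → ℝ) : ℝ :=
  if ρ = 0 then limUnder (𝓝[>] 0) g else ∫ v in Ioi (0:ℝ), g v * v ^ (ρ - 1)

lemma u0_int {ρ : ℝ} (h0 : 0 < ρ) (h1 : ρ < 1) :
    IntegrableOn (fun v : ℝ => u0 v * v ^ (ρ - 1)) (Ioi 0) := by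
  have hc : ContinuousOn (fun v : ℝ => u0 v * v ^ (ρ - 1)) (Ioi 0) := by
    unfold u0
    refine ContinuousOn.mul (continuousOn_const.div (by fun_prop) (fun v hv => ?_))
      (fun v hv => (Real.continuousAt_rpow_const _ _ (Or.inl (ne_of_gt hv))).continuousWithinAt)
    have : 0 < v := hv
    positivity
  rw [← Ioc_union_Ioi_eq_Ioi (zero_le_one' ℝ)]
  refine IntegrableOn.union ?_ ?_
  · have hi : IntegrableOn (fun v : ℝ => v ^ (ρ - 1)) (Ioc 0 1) := by
      have := intervalIntegral.intervalIntegrable_rpow' (r := ρ - 1) (by linarith) (a := 0) (b := 1)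
      rwa [intervalIntegrable_iff_integrableOn_Ioc_of_le zero_le_one] at this
    refine hi.mono' ((hc.mono Ioc_subset_Ioi_self).aestronglyMeasurable measurableSet_Ioc) ?_
    refine (ae_restrict_iff' measurableSet_Ioc).2 (ae_of_all _ fun v hv => ?_)
    have hv0 : 0 < v := hv.1
    have hp := Real.rpow_pos_of_pos hv0 (ρ - 1)
    rw [Real.norm_of_nonneg (mul_nonneg (u0_pos hv0).le hp.le)]
    refine mul_le_of_le_one_left hp.le ?_
    unfold u0
    rw [div_le_one (by positivity)]; linarith
  · have hi : IntegrableOn (fun v : ℝ => v ^ (ρ - 2)) (Ioi 1) :=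
      integrableOn_Ioi_rpow_of_lt (by linarith) one_pos
    refine hi.mono' ((hc.mono (Ioi_subset_Ioi zero_le_one)).aestronglyMeasurable measurableSet_Ioi) ?_
    refine (ae_restrict_iff' measurableSet_Ioi).2 (ae_of_all _ fun v hv => ?_)
    have hv0 : 0 < v := zero_lt_one.trans hv
    have hp := Real.rpow_pos_of_pos hv0 (ρ - 1)
    rw [Real.norm_of_nonneg (mul_nonneg (u0_pos hv0).le hp.le)]
    have e : v ^ (ρ - 2) = v⁻¹ * v ^ (ρ - 1) := by
      rw [show ρ - 2 = (-1) + (ρ - 1) by ring, Real.rpow_add hv0, Real.rpow_neg_one]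
    rw [e]
    unfold u0
    rw [one_div]
    gcongr
    linarith

lemma adm_int {ρ : ℝ} (h0 : 0 < ρ) (h1 : ρ < 1) {g : ℝ → ℝ} (hg : Adm g) :
    IntegrableOn (fun v : ℝ => g v * v ^ (ρ - 1)) (Ioi 0) := by
  obtain ⟨hc, ⟨C, hC⟩, -⟩ := hg
  refine ((u0_int h0 h1).const_mul C).mono' (ContinuousOn.aestronglyMeasurable
    (hc.mul (fun v hv => (Real.continuousAt_rpow_const _ _ (Or.inl (ne_of_gt hv))).continuousWithinAt))
    measurableSet_Ioi) ?_
  refine (ae_restrict_iff' measurableSet_Ioi).2 (ae_of_all _ fun v hv => ?_)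
  have hp := Real.rpow_pos_of_pos (mem_Ioi.1 hv) (ρ - 1)
  rw [norm_mul, Real.norm_of_nonneg hp.le, ← mul_assoc]
  exact mul_le_mul_of_nonneg_right (hC v hv) hp.le

lemma lam_bfun {ρ : ℝ} (h0 : 0 ≤ ρ) (h1 : ρ < 1) : ∃ K, BFun (Lam ρ) K := by
  rcases h0.eq_or_lt with h | h
  · refine ⟨1, ⟨fun a b g₁ g₂ hg₁ hg₂ => ?_, fun ε g hε hg hb => ?_⟩⟩
    · obtain ⟨l1, t1⟩ := hg₁.2.2
      obtain ⟨l2, t2⟩ := hg₂.2.2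
      simp only [Lam, ← h, if_true]
      rw [t1.limUnder_eq, t2.limUnder_eq, ((t1.const_mul a).add (t2.const_mul b)).limUnder_eq]
    · obtain ⟨l1, t1⟩ := hg.2.2
      simp only [Lam, ← h, if_true]
      rw [t1.limUnder_eq, one_mul]
      refine le_of_tendsto t1.abs ?_
      filter_upwards [self_mem_nhdsWithin] with v hv
      have hv : 0 < v := hv
      refine (hb v hv).trans (mul_le_of_le_one_right hε ?_)
      unfold u0
      rw [div_le_one (by positivity)]; linarith
  · refine ⟨∫ v in Ioi (0:ℝ), u0 v * v ^ (ρ - 1), ⟨fun a b g₁ g₂ hg₁ hg₂ => ?_, fun ε g hε hg hb => ?_⟩⟩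
    · simp only [Lam, h.ne', if_false]
      rw [← integral_const_mul, ← integral_const_mul, ← integral_add]
      · congr 1; ext v; ring
      · exact (adm_int h h1 hg₁).const_mul a
      · exact (adm_int h h1 hg₂).const_mul b
    · simp only [Lam, h.ne', if_false]
      rw [mul_comm, ← integral_const_mul, ← Real.norm_eq_abs]
      refine norm_integral_le_of_norm_le ((u0_int h h1).const_mul ε) ?_
      refine (ae_restrict_iff' measurableSet_Ioi).2 (ae_of_all _ fun v hv => ?_)
      have hp := Real.rpow_pos_of_pos (mem_Ioi.1 hv) (ρ - 1)
      rw [norm_mul, Real.norm_of_nonneg hp.le, ← mul_assoc]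
      exact mul_le_mul_of_nonneg_right (hb v hv) hp.le

lemma lam_scale {ρ : ℝ} {g : ℝ → ℝ} (hg : Adm g) {t : ℝ} (ht : 0 < t) :
    Lam ρ (fun v => g (t * v)) = t ^ (-ρ) * Lam ρ g := by
  by_cases h : ρ = 0
  · obtain ⟨l1, t1⟩ := hg.2.2
    have h2 : Tendsto (fun v : ℝ => t * v) (𝓝[>] 0) (𝓝[>] 0) := by
      rw [tendsto_nhdsWithin_iff]
      constructor
      · have : Tendsto (fun v : ℝ => t * v) (𝓝 0) (𝓝 (t * 0)) := by
          apply Continuous.tendsto; fun_prop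
        rw [mul_zero] at this
        exact this.mono_left nhdsWithin_le_nhds
      · filter_upwards [self_mem_nhdsWithin] with v hv
        exact mul_pos ht hv
    have h3 := t1.comp h2
    simp only [Lam, h, if_true, neg_zero, Real.rpow_zero, one_mul]
    rw [t1.limUnder_eq]
    exact h3.limUnder_eq
  · simp only [Lam, h, if_false]
    have := integral_comp_mul_left_Ioi (fun v => g v * v ^ (ρ - 1)) 0 ht
    rw [mul_zero] at this
    have e : ∫ v in Ioi (0:ℝ), g (t * v) * v ^ (ρ - 1) = 
      t ^ (1 - ρ) * ∫ v in Ioi (0:ℝ), g (t * v) * (t * v) ^ (ρ - 1) := by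
      rw [← integral_const_mul]
      refine setIntegral_congr_fun measurableSet_Ioi fun v hv => ?_
      have hv : 0 < v := hv
      rw [Real.mul_rpow ht.le hv.le]
      have : t ^ (1 - ρ) * t ^ (ρ - 1) = 1 := by
        rw [← Real.rpow_add ht]; simp
      linear_combination (-(g (t * v) * v ^ (ρ - 1))) * this
    rw [e, this, smul_eq_mul, ← mul_assoc]
    congr 1
    rw [← Real.rpow_neg_one, ← Real.rpow_add ht]; congr 1; ring

lemma lam_kA {ρ : ℝ} (h0 : 0 ≤ ρ) (h1 : ρ < 1) {y : ℝ} (hy : 0 < y) :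
    Lam ρ (kA y) = y ^ (1 - ρ) * Lam ρ (kA 1) := by
  obtain ⟨K, hK⟩ := lam_bfun h0 h1
  have ha : Adm (fun v => kA 1 (y * v)) := by
    have h := adm_kA hy
    refine (h.lin (1/y) 0 h).congr fun v hv => ?_
    simp only [kA, one_mul]; field_simp; ring
  have e := hK.lin y 0 _ _ ha ha
  rw [hK.congr (ha.lin y 0 ha) (adm_kA hy) (fun v hv => by
    simp only [kA, one_mul]; field_simp; ring), lam_scale (adm_kA one_pos) hy] at e
  rw [e, Real.rpow_sub hy, Real.rpow_neg hy.le, Real.rpow_one]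
  ring

lemma lam_kQ {ρ : ℝ} (h0 : 0 ≤ ρ) (h1 : ρ < 1) {y : ℝ} (hy : 0 < y) :
    Lam ρ (kQ y) = y ^ (1 + ρ) * Lam ρ (kQ 1) := by
  obtain ⟨K, hK⟩ := lam_bfun h0 h1
  have hv' : ∀ v : ℝ, 0 < v → 2 * 1 / (y⁻¹ * v) = 2 * y / v := fun v hv => by field_simp
  have ha : Adm (fun v => kQ 1 (y⁻¹ * v)) := by
    have h := adm_kQ hy
    refine (h.lin (1/y) 0 h).congr fun v hv => ?_
    simp only [kQ, hv' v hv]; field_simp; ring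
  have e := hK.lin y 0 _ _ ha ha
  rw [hK.congr (ha.lin y 0 ha) (adm_kQ hy) (fun v hv => by
    simp only [kQ, hv' v hv]; field_simp; ring), lam_scale (adm_kQ one_pos) (inv_pos.2 hy)] at e
  rw [e, Real.rpow_add hy, Real.inv_rpow hy.le, Real.rpow_neg hy.le, Real.rpow_one, inv_inv]
  ring

lemma right_slope {F : ℝ → ℝ} {d y a : ℝ} (h : HasDerivAt F d y)
    (h2 : Tendsto (fun ε => (F (y + ε) - F y) / ε) (𝓝[>] 0) (𝓝 a)) : a = d := by
  have h3 := h.tendsto_slope_zero_right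
  refine tendsto_nhds_unique h2 (h3.congr fun ε => ?_)
  simp; ring

lemma tend_congr {F G : ℝ → ℝ} {y a : ℝ} (hy : 0 < y) (hFG : ∀ z > 0, F z = G z) 
    (h : Tendsto (fun ε => (F (y + ε) - F y) / ε) (𝓝[>] 0) (𝓝 a)) :
    Tendsto (fun ε => (G (y + ε) - G y) / ε) (𝓝[>] 0) (𝓝 a) := by
  refine h.congr' ?_
  filter_upwards [self_mem_nhdsWithin] with ε hε
  have hε : 0 < ε := hε
  rw [hFG y hy, hFG _ (add_pos hy hε)]

lemma lam_kB {ρ : ℝ} (h0 : 0 ≤ ρ) (h1 : ρ < 1) : Lam ρ (kB 1) = (1 - ρ) * Lam ρ (kA 1) := by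
  obtain ⟨K, hK⟩ := lam_bfun h0 h1
  have h := hK.deriv kA kB (fun z v => -(2 * z * v ^ 2) / (1 + (z * v) ^ 2) ^ 2) 1 _
    (fun v hv z _ => deriv_kA hv z) (fun v _ z _ => deriv_kB z v)
    (fun v hv z hz => bound_A'' one_pos hz hv) (fun z hz => adm_kA (one_pos.trans_le hz.1))
    (adm_kB one_pos)
  have h2 := tend_congr (F := fun y => Lam ρ (kA y)) (G := fun y => y ^ (1 - ρ) * Lam ρ (kA 1))
    one_pos (fun z hz => lam_kA h0 h1 hz) h
  have h3 := (Real.hasDerivAt_rpow_const (x := 1) (p := 1 - ρ) (Or.inl one_ne_zero)).mul_const 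
    (Lam ρ (kA 1))
  have := right_slope h3 h2
  simpa using this

lemma lam_kQ' {ρ : ℝ} (h0 : 0 ≤ ρ) (h1 : ρ < 1) {y : ℝ} (hy : 0 < y) :
    Lam ρ (kQ' y) = (1 + ρ) * y ^ ρ * Lam ρ (kQ 1) := by
  obtain ⟨K, hK⟩ := lam_bfun h0 h1
  have h := hK.deriv kQ kQ' kE y _
    (fun v hv z _ => deriv_kQ hv z) (fun v _ z _ => deriv_kQ' z)
    (fun v hv z hz => bound_E hy hz hv) (fun z hz => adm_kQ (hy.trans_le hz.1))
    (adm_kQ' hy)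
  have h2 := tend_congr (F := fun y => Lam ρ (kQ y)) (G := fun y => y ^ (1 + ρ) * Lam ρ (kQ 1))
    hy (fun z hz => lam_kQ h0 h1 hz) h
  have h3 := (Real.hasDerivAt_rpow_const (x := y) (p := 1 + ρ) (Or.inl hy.ne')).mul_const 
    (Lam ρ (kQ 1))
  have := right_slope h3 h2
  simpa using this

lemma lam_kE {ρ : ℝ} (h0 : 0 ≤ ρ) (h1 : ρ < 1) :
    Lam ρ (kE 1) = (1 + ρ) * ρ * Lam ρ (kQ 1) := by
  obtain ⟨K, hK⟩ := lam_bfun h0 h1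
  have h := hK.deriv kQ' kE kE' 1 _
    (fun v hv z _ => deriv_kQ' z) (fun v _ z _ => deriv_kE z)
    (fun v hv z hz => bound_E' one_pos hz hv) (fun z hz => adm_kQ' (one_pos.trans_le hz.1))
    (adm_kE one_pos)
  have h2 := tend_congr (F := fun y => Lam ρ (kQ' y)) (G := fun y => (1 + ρ) * y ^ ρ * Lam ρ (kQ 1))
    one_pos (fun z hz => lam_kQ' h0 h1 hz) h
  have h3 := ((Real.hasDerivAt_rpow_const (x := 1) (p := ρ) (Or.inl one_ne_zero)).const_mul 
    (1 + ρ)).mul_const (Lam ρ (kQ 1))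
  have := right_slope h3 h2
  simpa using this

lemma lam_kE_val {ρ : ℝ} (h0 : 0 < ρ) (h1 : ρ < 1) :
    Lam ρ (kE 1) = 2 ^ ρ * Real.Gamma (1 - ρ) := by
  simp only [Lam, h0.ne', if_false]
  rw [← integral_comp_rpow_Ioi _ (show (-1:ℝ) ≠ 0 by norm_num)]
  have e := Real.integral_rpow_mul_exp_neg_mul_Ioi (show 0 < 1 - ρ by linarith) (zero_lt_two' ℝ)
  have : ∫ x in Ioi (0:ℝ), (|(-1:ℝ)| * x ^ ((-1:ℝ) - 1)) • (kE 1 (x ^ (-1:ℝ)) * (x ^ (-1:ℝ)) ^ (ρ - 1))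
      = ∫ t in Ioi (0:ℝ), 2 * (t ^ (1 - ρ - 1) * Real.exp (-(2 * t))) := by
    refine setIntegral_congr_fun measurableSet_Ioi fun x hx => ?_
    have hx : 0 < x := hx
    simp only [kE, smul_eq_mul, abs_neg, abs_one, one_mul]
    rw [← Real.rpow_mul hx.le, Real.rpow_neg_one]
    have : x ^ (1 - ρ - 1) = x ^ ((-1:ℝ) - 1) * x * x ^ (-1 * (ρ - 1)) := by
      nth_rewrite 3 [← Real.rpow_one x]
      rw [← Real.rpow_add hx, ← Real.rpow_add hx]; congr 1; ring
    rw [this]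
    have e2 : 2 * 1 / x⁻¹ = 2 * x := by field_simp
    rw [e2]
    field_simp
  rw [this, integral_const_mul, e]
  rw [Real.div_rpow (by norm_num) (by norm_num), Real.one_rpow, Real.rpow_sub (by norm_num)]
  simp; field_simp

lemma lam_kB_val {ρ : ℝ} (h0 : 0 < ρ) (h1 : ρ < 1) :
    Lam ρ (kB 1) = Real.Gamma (ρ / 2) * Real.Gamma (1 - ρ / 2) / 2 := by
  simp only [Lam, h0.ne', if_false]
  set G : ℝ → ℝ → ℝ := fun v t => v ^ (ρ - 1) * Real.exp (-((1 + v ^ 2) * t)) with hG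
  have hin : ∀ v : ℝ, ∫ t in Ioi (0:ℝ), G v t = kB 1 v * v ^ (ρ - 1) := by
    intro v
    simp only [hG]
    rw [integral_const_mul]
    have := Real.integral_rpow_mul_exp_neg_mul_Ioi one_pos (show 0 < 1 + v ^ 2 by positivity)
    simp at this
    rw [this, kB]; simp; ring
  have hInteg : Integrable (Function.uncurry G)
      ((volume.restrict (Ioi (0:ℝ))).prod (volume.restrict (Ioi (0:ℝ)))) := by
    rw [integrable_prod_iff]
    · constructor
      · refine ae_of_all _ fun v => ?_
        simp only [Function.uncurry, hG]
        apply Integrable.const_mul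
        have := exp_neg_integrableOn_Ioi 0 (b := 1 + v ^ 2) (by positivity)
        simp only [neg_mul] at this
        exact this
      · have := adm_int h0 h1 (adm_kB one_pos)
        refine this.congr ?_
        refine (ae_restrict_iff' measurableSet_Ioi).2 (ae_of_all _ fun v hv => ?_)
        simp only
        rw [← hin v]
        refine integral_congr_ae (ae_of_all _ fun t => ?_)
        simp only [Function.uncurry, hG]
        have hp := Real.rpow_pos_of_pos (mem_Ioi.1 hv) (ρ - 1)
        rw [Real.norm_of_nonneg (by positivity)]
    · apply Measurable.aestronglyMeasurable
      simp only [hG, Function.uncurry_def]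
      fun_prop
  have hsw := integral_integral_swap hInteg
  simp only [hin] at hsw
  rw [hsw]
  have hin2 : ∀ t ∈ Ioi (0:ℝ), ∫ v in Ioi (0:ℝ), G v t = 
      Real.Gamma (ρ / 2) / 2 * (t ^ ((1 - ρ / 2) - 1) * Real.exp (-(1 * t))) := by
    intro t ht
    have ht : 0 < t := ht
    have e := integral_rpow_mul_exp_neg_mul_rpow (p := 2) (q := ρ - 1) zero_lt_two (by linarith) ht
    have e2 : ∫ v in Ioi (0:ℝ), G v t = 
      ∫ v in Ioi (0:ℝ), Real.exp (-t) * (v ^ (ρ - 1) * Real.exp (-t * v ^ (2:ℝ))) := by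
      refine setIntegral_congr_fun measurableSet_Ioi fun x hx => ?_
      simp only [hG]
      rw [mul_left_comm, ← Real.exp_add]
      congr 2
      rw [Real.rpow_two]; ring
    rw [e2, integral_const_mul, e]
    rw [show ρ - 1 + 1 = ρ by ring, show (1 - ρ / 2) - 1 = -ρ/2 by ring, one_mul]
    ring
  rw [setIntegral_congr_fun measurableSet_Ioi hin2, integral_const_mul,
    Real.integral_rpow_mul_exp_neg_mul_Ioi (by linarith) one_pos]
  simp; ring

lemma lam_kQ_pos {ρ : ℝ} (h0 : 0 ≤ ρ) (h1 : ρ < 1) : 0 < Lam ρ (kQ 1) := by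
  rcases h0.eq_or_lt with h | h
  · simp only [Lam, ← h, if_true]
    rw [(kQ_lim0 one_pos).limUnder_eq]; exact one_pos
  · have := lam_kE h0 h1
    rw [lam_kE_val h h1] at this
    have hG := Real.Gamma_pos_of_pos (show 0 < 1 - ρ by linarith)
    have hp : 0 < (1 + ρ) * ρ * Lam ρ (kQ 1) := by rw [← this]; positivity
    exact pos_of_mul_pos_right hp (by positivity)

lemma lam_ratio {ρ : ℝ} (h0 : 0 ≤ ρ) (h1 : ρ < 1) :
    Lam ρ (kA 1) = Real.pi * Cconst (1 + ρ) * 2 ^ (-ρ) * Lam ρ (kQ 1) := by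
  have hpi := Real.pi_pos
  rcases h0.eq_or_lt with h | h
  · rw [← h]
    simp only [Lam, if_true]
    rw [(kQ_lim0 one_pos).limUnder_eq, (kA_limit0 1).limUnder_eq]
    simp only [Cconst, add_zero, neg_zero, Real.rpow_zero, one_mul, Real.sin_pi_div_two]
    rw [show (1:ℝ) + 1 = 2 by norm_num, Real.Gamma_two]
    field_simp; norm_num
  · have hA := lam_kB h0 h1
    have hE := lam_kE h0 h1
    rw [lam_kB_val h h1, Real.Gamma_mul_Gamma_one_sub] at hA
    rw [lam_kE_val h h1] at hE
    have hr := Real.Gamma_mul_Gamma_one_sub ρ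
    have hs : Real.sin (Real.pi * ρ) = 2 * Real.sin (Real.pi * (ρ / 2)) * Real.cos (Real.pi * (ρ / 2)) := by
      rw [← Real.sin_two_mul]; congr 1; ring
    have hs1 : 0 < Real.sin (Real.pi * (ρ / 2)) :=
      Real.sin_pos_of_pos_of_lt_pi (by positivity) (by nlinarith)
    have hc1 : 0 < Real.cos (Real.pi * (ρ / 2)) :=
      Real.cos_pos_of_mem_Ioo ⟨by nlinarith, by nlinarith⟩
    have hG : Real.Gamma (1 + (1 + ρ)) = (1 + ρ) * (ρ * Real.Gamma ρ) := by
      rw [show 1 + (1 + ρ) = (1 + ρ) + 1 by ring, Real.Gamma_add_one (by positivity),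
        show 1 + ρ = ρ + 1 by ring, Real.Gamma_add_one h.ne']
    have hsc : Real.sin ((1 + ρ) * Real.pi / 2) = Real.cos (Real.pi * (ρ / 2)) := by
      rw [← Real.sin_add_pi_div_two]; congr 1; ring
    have h2 : (2:ℝ) ^ (-ρ) * 2 ^ ρ = 1 := by
      rw [← Real.rpow_add (by norm_num)]; simp
    have hG1 := Real.Gamma_pos_of_pos h
    have hG2 := Real.Gamma_pos_of_pos (show 0 < 1 - ρ by linarith)
    unfold Cconst
    rw [hG, hsc]
    have h1' : (1 - ρ) ≠ 0 := by linarith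
    have hQ : Lam ρ (kQ 1) = 2 ^ ρ * Real.Gamma (1 - ρ) / ((1 + ρ) * ρ) := by
      rw [hE]; field_simp
    have hA' : Lam ρ (kA 1) = Real.pi / Real.sin (Real.pi * (ρ / 2)) / 2 / (1 - ρ) := by
      rw [hA]; field_simp
    rw [hs] at hr
    have hr' : Real.pi = Real.Gamma ρ * Real.Gamma (1 - ρ) * (2 * Real.sin (Real.pi * (ρ / 2)) * Real.cos (Real.pi * (ρ / 2))) := by
      rw [hr, div_mul_cancel₀ _ (by positivity)]
    rw [hQ, hA', show 2 - (1 + ρ) = 1 - ρ by ring]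
    have : Real.pi / Real.sin (Real.pi * (ρ / 2)) = 
      Real.Gamma ρ * Real.Gamma (1 - ρ) * (2 * Real.cos (Real.pi * (ρ / 2))) := by
      rw [div_eq_iff hs1.ne']; linarith
    rw [this]
    have e : Real.pi * ((1 + ρ) * (ρ * Real.Gamma ρ) * Real.cos (Real.pi * (ρ / 2)) / (Real.pi * (1 - ρ))) *
        2 ^ (-ρ) * (2 ^ ρ * Real.Gamma (1 - ρ) / ((1 + ρ) * ρ)) = 
        (2 ^ (-ρ) * 2 ^ ρ) * (Real.Gamma ρ * Real.Gamma (1 - ρ) * Real.cos (Real.pi * (ρ / 2)) / (1 - ρ)) := by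
      field_simp
    rw [e, h2]
    field_simp


noncomputable def JJ (μ : Measure ℝ) (φ : ℝ → ℝ) (g : ℝ → ℝ) (T : ℝ) : ℝ :=
  ∫ l, φ l * g (φ l / T) ∂μ

lemma jj_u0_bd {x T : ℝ} (hx : 0 < x) (hT : 0 < T) : x * u0 (x / T) ≤ T := by
  unfold u0
  have e : x * (1 / (1 + x / T)) = x * T / (T + x) := by field_simp
  rw [e, div_le_iff₀ (by positivity)]
  nlinarith [mul_pos hT hT]

lemma jj_int {μ : Measure ℝ} [IsFiniteMeasure μ] {φ : ℝ → ℝ} (hφ : Measurable φ)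
    (hpos : ∀ᵐ l ∂μ, 0 < φ l) {g : ℝ → ℝ} (hg : Adm g) {T : ℝ} (hT : 0 < T) :
    Integrable (fun l => φ l * g (φ l / T)) μ := by
  obtain ⟨hc, ⟨C, hC⟩, -⟩ := hg
  have hC0 : 0 ≤ C := by
    have h := (abs_nonneg _).trans (hC 1 one_pos)
    have := u0_pos one_pos
    exact nonneg_of_mul_nonneg_left h this
  have hm : Measurable ((Ioi (0:ℝ)).indicator g) := by
    classical
    have := hc.measurable_piecewise (g := (0 : ℝ → ℝ)) continuousOn_const measurableSet_Ioi
    rwa [piecewise_eq_indicator] at this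
  have hm2 : AEStronglyMeasurable (fun l => φ l * g (φ l / T)) μ := by
    refine AEStronglyMeasurable.congr (f := fun l => φ l * (Ioi (0:ℝ)).indicator g (φ l / T))
      (hφ.mul (hm.comp (hφ.div_const T))).aestronglyMeasurable ?_
    filter_upwards [hpos] with l hl
    rw [indicator_of_mem]
    exact div_pos hl hT
  refine Integrable.mono' (integrable_const (C * T)) hm2 ?_
  filter_upwards [hpos] with l hl
  rw [norm_mul, Real.norm_of_nonneg hl.le, Real.norm_eq_abs]
  have h1 := hC _ (div_pos hl hT)
  have h2 := jj_u0_bd hl hT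
  calc φ l * |g (φ l / T)| ≤ φ l * (C * u0 (φ l / T)) := by gcongr
    _ = C * (φ l * u0 (φ l / T)) := by ring
    _ ≤ C * T := by gcongr

lemma adm_u0 : Adm u0 := by
  refine ⟨?_, ⟨1, fun v hv => ?_⟩, ⟨1, ?_⟩⟩
  · unfold u0
    refine continuousOn_const.div (by fun_prop) (fun v hv => ?_)
    have : 0 < v := hv
    positivity
  · rw [one_mul, abs_of_pos (u0_pos hv)]
  · have : ContinuousAt u0 0 := by
      unfold u0
      exact continuousAt_const.div (by fun_prop) (by norm_num)
    have h := this.tendsto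
    simp only [u0, add_zero, div_one] at h
    exact h.mono_left nhdsWithin_le_nhds

lemma jj_bfun {μ : Measure ℝ} [IsFiniteMeasure μ] {φ : ℝ → ℝ} (hφ : Measurable φ)
    (hpos : ∀ᵐ l ∂μ, 0 < φ l) {T c K : ℝ} (hT : 0 < T) (hc : 0 < c)
    (hK : JJ μ φ u0 T / c ≤ K) : BFun (fun g => JJ μ φ g T / c) K := by
  refine ⟨fun a b g₁ g₂ h₁ h₂ => ?_, fun ε g hε hg hb => ?_⟩
  · simp only [JJ]
    have : ∫ l, φ l * (a * g₁ (φ l / T) + b * g₂ (φ l / T)) ∂μ =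
      a * ∫ l, φ l * g₁ (φ l / T) ∂μ + b * ∫ l, φ l * g₂ (φ l / T) ∂μ := by
      rw [← integral_const_mul, ← integral_const_mul, ← integral_add]
      · congr 1; ext v; ring
      · exact (jj_int hφ hpos h₁ hT).const_mul a
      · exact (jj_int hφ hpos h₂ hT).const_mul b
    rw [this]; ring
  · rw [abs_div, abs_of_pos hc]
    have h : |JJ μ φ g T| ≤ ε * JJ μ φ u0 T := by
      simp only [JJ]
      rw [← integral_const_mul, ← Real.norm_eq_abs]
      refine norm_integral_le_of_norm_le ((jj_int hφ hpos adm_u0 hT).const_mul ε) ?_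
      filter_upwards [hpos] with l hl
      rw [norm_mul, Real.norm_of_nonneg hl.le, Real.norm_eq_abs]
      have := hb _ (div_pos hl hT)
      calc φ l * |g (φ l / T)| ≤ φ l * (ε * u0 (φ l / T)) := by gcongr
        _ = _ := by ring
    calc |JJ μ φ g T| / c ≤ ε * JJ μ φ u0 T / c := by gcongr
      _ = (JJ μ φ u0 T / c) * ε := by ring
      _ ≤ K * ε := by gcongr

lemma jj_mono {μ : Measure ℝ} [IsFiniteMeasure μ] {φ : ℝ → ℝ} (hφ : Measurable φ)
    (hpos : ∀ᵐ l ∂μ, 0 < φ l) {g : ℝ → ℝ} (hg : Adm g) {C : ℝ} (hlow : ∀ v > 0, u0 v ≤ C * g v)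
    {T : ℝ} (hT : 0 < T) : JJ μ φ u0 T ≤ C * JJ μ φ g T := by
  simp only [JJ]
  rw [← integral_const_mul]
  refine integral_mono_ae (jj_int hφ hpos adm_u0 hT) ((jj_int hφ hpos hg hT).const_mul C) ?_
  filter_upwards [hpos] with l hl
  have := hlow _ (div_pos hl hT)
  calc φ l * u0 (φ l / T) ≤ φ l * (C * g (φ l / T)) := by gcongr
    _ = _ := by ring

lemma bfun_mono {Λ : (ℝ → ℝ) → ℝ} {K K' : ℝ} (h : BFun Λ K) (hK : K ≤ K') : BFun Λ K' :=
  ⟨h.lin, fun ε g hε hg hb => (h.bd ε g hε hg hb).trans (by gcongr)⟩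

lemma jj_ev_bfun {μ : Measure ℝ} [IsFiniteMeasure μ] {φ : ℝ → ℝ} (hφ : Measurable φ)
    (hpos : ∀ᵐ l ∂μ, 0 < φ l) {g : ℝ → ℝ} (hg : Adm g) {C : ℝ} (hC : 0 ≤ C)
    (hlow : ∀ v > 0, u0 v ≤ C * g v)
    {H : ℝ → ℝ} (hH : ∀ t > 0, 0 < H t) {a : ℝ}
    (hlim : Tendsto (fun T => JJ μ φ g T / H T) atTop (𝓝 a)) :
    ∀ᶠ T in atTop, BFun (fun g => JJ μ φ g T / H T) (C * (a + 1)) := by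
  filter_upwards [eventually_gt_atTop 0, hlim.eventually_lt_const (show a < a + 1 by linarith)]
    with T hT h
  refine jj_bfun hφ hpos hT (hH T hT) ?_
  have h1 := jj_mono hφ hpos hg hlow hT
  have := hH T hT
  calc JJ μ φ u0 T / H T ≤ C * JJ μ φ g T / H T := by gcongr
    _ = C * (JJ μ φ g T / H T) := by ring
    _ ≤ _ := by gcongr

lemma jj_scale {μ : Measure ℝ} {φ : ℝ → ℝ} (hpos : ∀ᵐ l ∂μ, 0 < φ l) {g g' : ℝ → ℝ} {c s T : ℝ}
    (hT : 0 < T) (hs : 0 < s)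
    (h : ∀ v > 0, g' v = c * g (v / s)) :
    JJ μ φ g' T = c * JJ μ φ g (s * T) := by
  simp only [JJ]
  rw [← integral_const_mul]
  refine integral_congr_ae ?_
  filter_upwards [hpos] with l hl
  rw [h _ (div_pos hl hT), div_div, mul_comm T s]; ring

lemma jj_scale_lim {μ : Measure ℝ} {φ : ℝ → ℝ} (hpos : ∀ᵐ l ∂μ, 0 < φ l) {g g' : ℝ → ℝ}
    {c s ρ a : ℝ} (hs : 0 < s) (h : ∀ v > 0, g' v = c * g (v / s))
    {H : ℝ → ℝ} (hH : ∀ t > 0, 0 < H t)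
    (hHr : ∀ s > 0, Tendsto (fun t => H (s * t) / H t) atTop (𝓝 (s ^ ρ)))
    (hlim : Tendsto (fun T => JJ μ φ g T / H T) atTop (𝓝 a)) :
    Tendsto (fun T => JJ μ φ g' T / H T) atTop (𝓝 (c * s ^ ρ * a)) := by
  have h1 := hlim.comp (tendsto_id.const_mul_atTop hs)
  have h2 := ((hHr s hs).const_mul c).mul h1
  refine h2.congr' ?_
  filter_upwards [eventually_gt_atTop 0] with T hT
  simp only [Function.comp, id]
  rw [jj_scale hpos hT hs h]
  have := hH T hT
  have := hH (s * T) (mul_pos hs hT)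
  field_simp

/-- The Tauberian core. -/
theorem tauber {μ : Measure ℝ} [IsFiniteMeasure μ] {φ : ℝ → ℝ} (hφ : Measurable φ)
    (hpos : ∀ᵐ l ∂μ, 0 < φ l) {ρ : ℝ} (h0 : 0 ≤ ρ) (h1 : ρ < 1)
    {H : ℝ → ℝ} (hH : ∀ t > 0, 0 < H t)
    (hHr : ∀ s > 0, Tendsto (fun t => H (s * t) / H t) atTop (𝓝 (s ^ ρ))) :
    Tendsto (fun T => JJ μ φ (kQ 1) T / H T) atTop (𝓝 (Lam ρ (kQ 1))) ↔
    Tendsto (fun T => JJ μ φ (kA 1) T / H T) atTop (𝓝 (Lam ρ (kA 1))) := by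
  obtain ⟨K, hK⟩ := lam_bfun h0 h1
  constructor
  · intro h
    have hb := jj_ev_bfun hφ hpos (adm_kQ one_pos) zero_le_two (fun v hv => kQ_lower hv) hH h
    set K2 := 2 * (Lam ρ (kQ 1) + 1)
    have := cls_Q_to_A (L := fun T g => JJ μ φ g T / H T) (Λ := Lam ρ) (K := max K K2) 
      (bfun_mono hK (le_max_left _ _))
      (hb.mono fun T h => bfun_mono h (le_max_right _ _)) (fun y hy => ⟨adm_kQ hy, ?_⟩)
    · exact this.2
    · have h3 := jj_scale_lim (g' := kQ y) (c := y) hpos hy (fun v hv => by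
        simp only [kQ]
        rw [show 2 * 1 / (v / y) = 2 * y / v by field_simp]
        field_simp) hH hHr h
      rw [lam_kQ h0 h1 hy, Real.rpow_add hy, Real.rpow_one]
      exact h3
  · intro h
    have hb := jj_ev_bfun hφ hpos (adm_kA one_pos) zero_le_two (fun v hv => kA_lower hv) hH h
    set K2 := 2 * (Lam ρ (kA 1) + 1)
    have := cls_A_to_Q (L := fun T g => JJ μ φ g T / H T) (Λ := Lam ρ) (K := max K K2) 
      (bfun_mono hK (le_max_left _ _))
      (hb.mono fun T h => bfun_mono h (le_max_right _ _)) (fun y hy => ⟨adm_kA hy, ?_⟩)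
    · exact this.2
    · have h3 := jj_scale_lim (g' := kA y) (c := y) hpos (inv_pos.2 hy) (fun v hv => by
        simp only [kA]
        rw [show 1 * (v / y⁻¹) = y * v by field_simp]
        field_simp) hH hHr h
      rw [lam_kA h0 h1 hy, Real.rpow_sub hy, Real.rpow_one]
      rw [Real.inv_rpow hy.le] at h3
      rwa [div_eq_mul_inv]


lemma uct_aux {g : ℝ → ℝ} (hg : Continuous g)
    (hs : ∀ u, Tendsto (fun x => g (x + u) - g x) atTop (𝓝 0)) {ε : ℝ} (hε : 0 < ε) :
    ∃ δ > 0, ∃ N : ℝ, ∀ x ≥ N, ∀ u, |u| < δ → |g (x + u) - g x| ≤ 2 * ε := by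
  set A : ℕ → Set ℝ := fun N => ⋂ x : ℝ, ⋂ _ : (N:ℝ) ≤ x, {u | |g (x + u) - g x| ≤ ε} with hA
  have hcl : ∀ N, IsClosed (A N) := fun N => by
    refine isClosed_iInter fun x => isClosed_iInter fun _ => ?_
    exact isClosed_le (by fun_prop) continuous_const
  have hun : ⋃ N, A N = univ := by
    refine eq_univ_of_forall fun u => ?_
    have := (hs u).abs.eventually_lt_const (u := ε) (by simpa using hε)
    obtain ⟨X, hX⟩ := eventually_atTop.1 this
    obtain ⟨N, hN⟩ := exists_nat_ge X
    refine mem_iUnion.2 ⟨N, ?_⟩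
    simp only [hA, mem_iInter, mem_setOf_eq]
    exact fun x hx => (hX x (hN.trans hx)).le
  obtain ⟨N, u₀, hu₀⟩ := nonempty_interior_of_iUnion_of_closed hcl hun
  obtain ⟨δ, hδ, hb⟩ := Metric.mem_nhds_iff.1 (mem_interior_iff_mem_nhds.1 hu₀)
  have key : ∀ u, |u| < δ → ∀ x : ℝ, (N:ℝ) ≤ x → |g (x + (u₀ + u)) - g x| ≤ ε := by
    intro u hu x hx
    have : u₀ + u ∈ A N := hb (by simpa [Real.dist_eq] using hu)
    simp only [hA, mem_iInter, mem_setOf_eq] at this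
    exact this x hx
  refine ⟨δ, hδ, N + u₀, fun x hx u hu => ?_⟩
  have k1 := key u hu (x - u₀) (by linarith)
  have k2 := key 0 (by simpa using hδ) (x - u₀) (by linarith)
  rw [show x - u₀ + (u₀ + u) = x + u by ring] at k1
  rw [show x - u₀ + (u₀ + 0) = x by ring] at k2
  rw [abs_le] at *
  constructor <;> linarith [k1.1, k1.2, k2.1, k2.2]

lemma uct {h : ℝ → ℝ} (hh : SlowlyVaryingAtTop h) {ι : Type*} {l : Filter ι} {a b : ι → ℝ}
    (ha : Tendsto a l atTop) (hb : Tendsto (fun i => b i / a i) l (𝓝 1)) :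
    Tendsto (fun i => h (b i) / h (a i)) l (𝓝 1) := by
  obtain ⟨hp, hc, hs⟩ := hh
  set g : ℝ → ℝ := fun x => Real.log (h (Real.exp x)) with hgd
  have hg : Continuous g := by
    refine Continuous.log ?_ (fun x => (hp _ (Real.exp_pos x)).ne')
    exact hc.comp_continuous Real.continuous_exp (fun x => Real.exp_pos x)
  have hgs : ∀ u, Tendsto (fun x => g (x + u) - g x) atTop (𝓝 0) := by
    intro u
    have h1 := ((hs _ (Real.exp_pos u)).comp Real.tendsto_exp_atTop).log one_ne_zero
    rw [Real.log_one] at h1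
    refine h1.congr fun x => ?_
    simp only [Function.comp, hgd]
    rw [Real.log_div (hp _ (by positivity)).ne' (hp _ (by positivity)).ne', Real.exp_add, mul_comm (Real.exp u)]
  have hu : Tendsto (fun i => Real.log (b i / a i)) l (𝓝 0) := by
    have := hb.log one_ne_zero
    rwa [Real.log_one] at this
  have hx : Tendsto (fun i => Real.log (a i)) l atTop := Real.tendsto_log_atTop.comp ha
  have hmain : Tendsto (fun i => g (Real.log (a i) + Real.log (b i / a i)) - g (Real.log (a i))) l (𝓝 0) := by
    rw [Metric.tendsto_nhds]
    intro ε hε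
    obtain ⟨δ, hδ, N, hN⟩ := uct_aux hg hgs (show 0 < ε / 4 by positivity)
    filter_upwards [hx.eventually_ge_atTop N, Metric.tendsto_nhds.1 hu δ hδ] with i h1 h2
    rw [Real.dist_eq, sub_zero] at *
    have := hN _ h1 _ h2
    linarith
  have h3 := (Real.continuous_exp.tendsto 0).comp hmain
  rw [Real.exp_zero] at h3
  refine h3.congr' ?_
  filter_upwards [ha.eventually_gt_atTop 0, hb.eventually_const_lt one_pos] with i h1 h2
  have h4 : 0 < b i := by
    have := mul_pos h2 h1
    rwa [div_mul_cancel₀ _ h1.ne'] at this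
  simp only [Function.comp, hgd]
  rw [← Real.log_div (hp _ (by positivity)).ne' (hp _ (by positivity)).ne', 
    Real.exp_log (div_pos (hp _ (by positivity)) (hp _ (by positivity))), Real.exp_add, Real.exp_log h1, Real.exp_log h2,
    mul_div_cancel₀ _ h1.ne']

noncomputable def HH (ρ : ℝ) (h : ℝ → ℝ) (T : ℝ) : ℝ := T ^ ρ * h T

lemma hh_pos {h : ℝ → ℝ} (hh : SlowlyVaryingAtTop h) (ρ : ℝ) : ∀ t > 0, 0 < HH ρ h t :=
  fun t ht => mul_pos (Real.rpow_pos_of_pos ht ρ) (hh.1 t ht)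

lemma hh_uct {h : ℝ → ℝ} (hh : SlowlyVaryingAtTop h) (ρ : ℝ) {s : ℝ} (hs : 0 < s) 
    {ι : Type*} {l : Filter ι} {a b : ι → ℝ}
    (ha : Tendsto a l atTop) (hb : Tendsto (fun i => b i / a i) l (𝓝 s)) :
    Tendsto (fun i => HH ρ h (b i) / HH ρ h (a i)) l (𝓝 (s ^ ρ)) := by
  have h1 : Tendsto (fun i => h (s * a i) / h (a i)) l (𝓝 1) := (hh.2.2 s hs).comp ha
  have h2 : Tendsto (fun i => h (b i) / h (s * a i)) l (𝓝 1) := by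
    refine uct hh (ha.const_mul_atTop hs) ?_
    have := hb.div_const s
    rw [div_self hs.ne'] at this
    refine this.congr fun i => ?_
    rw [div_div, mul_comm (a i)]
  have h3 : Tendsto (fun i => (b i / a i) ^ ρ) l (𝓝 (s ^ ρ)) := hb.rpow_const (Or.inl hs.ne')
  have h4 := (h3.mul h2).mul h1
  rw [mul_one, mul_one] at h4
  refine h4.congr' ?_
  filter_upwards [ha.eventually_gt_atTop 0, hb.eventually_const_lt hs] with i p1 p2
  have p3 : 0 < b i := by
    have := mul_pos p2 p1
    rwa [div_mul_cancel₀ _ p1.ne'] at this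
  unfold HH
  rw [Real.div_rpow p3.le p1.le]
  have := hh.1 _ p1
  have := hh.1 _ (mul_pos hs p1)
  have := Real.rpow_pos_of_pos p1 ρ
  field_simp

lemma hh_rv {h : ℝ → ℝ} (hh : SlowlyVaryingAtTop h) (ρ : ℝ) : 
    ∀ s > 0, Tendsto (fun t => HH ρ h (s * t) / HH ρ h t) atTop (𝓝 (s ^ ρ)) := by
  intro s hs
  refine hh_uct hh ρ hs tendsto_id ?_
  refine tendsto_const_nhds.congr' ?_
  filter_upwards [eventually_gt_atTop 0] with t ht
  field_simp


lemma geo_sum (l : ℝ) (n : ℕ) : (1 - l) * ∑ k ∈ Finset.Ico 1 (n + 1), l ^ k = l - l ^ (n + 1) := by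
  induction n with
  | zero => simp
  | succ n ih => rw [Finset.sum_Ico_succ_top (by omega), mul_add, ih]; ring

lemma cesaro_sum (l : ℝ) (n : ℕ) :
    (1 - l) ^ 2 * ∑ k ∈ Finset.Ico 1 n, ((n : ℝ) - (k : ℝ)) * l ^ k =
      n * l * (1 - l) - l * (1 - l ^ n) := by
  induction n with
  | zero => simp
  | succ n ih =>
    rcases Nat.eq_zero_or_pos n with rfl | hn
    · simp
    have e : ∑ k ∈ Finset.Ico 1 (n + 1), (((n + 1 : ℕ) : ℝ) - (k : ℝ)) * l ^ k =
        ∑ k ∈ Finset.Ico 1 n, ((n : ℝ) - (k : ℝ)) * l ^ k + ∑ k ∈ Finset.Ico 1 (n + 1), l ^ k := by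
      have : ∑ k ∈ Finset.Ico 1 (n + 1), ((n : ℝ) - (k : ℝ)) * l ^ k =
          ∑ k ∈ Finset.Ico 1 n, ((n : ℝ) - (k : ℝ)) * l ^ k := by
        rw [Finset.sum_Ico_succ_top (by omega)]; simp
      rw [← this, ← Finset.sum_add_distrib]
      refine Finset.sum_congr rfl fun k _ => ?_
      push_cast; ring
    rw [e, mul_add, ih]
    push_cast
    linear_combination (1 - l) * geo_sum l n

noncomputable def phiv (l : ℝ) : ℝ := (1 + l) / (1 - l)

lemma phiv_pos {l : ℝ} (hl : l ∈ Ioo (-1:ℝ) 1) : 0 < phiv l :=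
  div_pos (by linarith [hl.1]) (by linarith [hl.2])

lemma phiv_meas : Measurable phiv := by unfold phiv; fun_prop

noncomputable def DD (n : ℕ) (l : ℝ) : ℝ :=
  (n : ℝ) + 2 * ∑ k ∈ Finset.Ico 1 n, ((n : ℝ) - (k : ℝ)) * l ^ k

lemma dd_diff {n : ℕ} (hn : 0 < n) {l : ℝ} (hl : l ∈ Ioo (-1:ℝ) 1) :
    DD n l - n * (phiv l * kQ 1 (phiv l / n)) = (1 - Real.exp (-(2 * n / phiv l))) / 2 +
      2 * l / (1 - l) ^ 2 * (l ^ n - Real.exp (-(2 * n / phiv l))) := by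
  have hv := phiv_pos hl
  have h1 : 0 < 1 - l := by linarith [hl.2]
  have hn' : (0:ℝ) < n := by exact_mod_cast hn
  have hc := cesaro_sum l n
  have e1 : DD n l = (n * (1 - l ^ 2) - 2 * l * (1 - l ^ n)) / (1 - l) ^ 2 := by
    rw [eq_div_iff (by positivity)]
    unfold DD
    linear_combination 2 * hc
  have e2 : 2 * 1 / (phiv l / n) = 2 * n / phiv l := by field_simp
  rw [e1]
  unfold kQ
  rw [e2]
  generalize Real.exp (-(2 * n / phiv l)) = e
  unfold phiv
  have h1' := h1.ne'
  field_simp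
  ring

lemma exp_cmp {s : ℝ} (h0 : 0 < s) (h1 : s < 1) :
    (1 - s) / (1 + s) ≤ Real.exp (-(2 * s)) ∧ Real.exp (-(2 * s)) - (1 - s) / (1 + s) ≤ 2 * s ^ 3 := by
  have hs : 0 < 1 - s := by linarith
  constructor
  · have := Real.le_log_one_add_of_nonneg (x := 2 * s / (1 - s)) (by positivity)
    have e : 2 * (2 * s / (1 - s)) / (2 * s / (1 - s) + 2) = 2 * s := by
      field_simp; ring
    have e2 : 1 + 2 * s / (1 - s) = (1 + s) / (1 - s) := by field_simp; ring
    rw [e, e2] at this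
    have h3 := (Real.le_log_iff_exp_le (by positivity)).1 this
    rw [Real.exp_neg, ← inv_div]
    gcongr
  · have := exp_le_quad (b := 2 * s) (by positivity)
    have e : 1 - 2 * s + (2 * s) ^ 2 / 2 - (1 - s) / (1 + s) = 2 * s ^ 3 / (1 + s) := by
      field_simp; ring
    have : 2 * s ^ 3 / (1 + s) ≤ 2 * s ^ 3 := div_le_self (by positivity) (by linarith)
    linarith

lemma n_exp_bd {s : ℝ} (h0 : 0 < s) (h1 : s < 1) (n : ℕ) :
    n * s * Real.exp (-(2 * s)) ^ (n - 1) ≤ 2 := by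
  rcases Nat.eq_zero_or_pos n with rfl | hn
  · simp
  obtain ⟨m, rfl⟩ : ∃ m, n = m + 1 := ⟨n - 1, by omega⟩
  rw [Nat.add_sub_cancel, ← Real.exp_nat_mul]
  have h2 : m * s + 1 ≤ Real.exp (m * s) := Real.add_one_le_exp _
  have h3 : (m + 1) * s ≤ Real.exp (m * s) := by nlinarith
  have h4 : Real.exp (m * -(2 * s)) ≤ Real.exp (-(m * s)) := by
    apply Real.exp_le_exp.2; nlinarith [mul_nonneg (Nat.cast_nonneg (α := ℝ) m) h0.le]
  push_cast
  calc (m + 1) * s * Real.exp (m * -(2 * s)) ≤ Real.exp (m * s) * Real.exp (-(m * s)) := by gcongr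
    _ = 1 := by rw [← Real.exp_add]; simp
    _ ≤ 2 := by norm_num

lemma dd_bound {n : ℕ} (hn : 0 < n) {l : ℝ} (hl : l ∈ Ioo (-1:ℝ) 1) :
    |DD n l - n * (phiv l * kQ 1 (phiv l / n))| ≤ 9 := by
  have hv := phiv_pos hl
  have hl1 := hl.1
  have h1 : 0 < 1 - l := by linarith [hl.2]
  have hn' : (0:ℝ) < n := by exact_mod_cast hn
  rw [dd_diff hn hl]
  have he0 := Real.exp_pos (-(2 * n / phiv l))
  have he1 : Real.exp (-(2 * n / phiv l)) ≤ 1 := Real.exp_le_one_iff.2 (by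
    rw [neg_nonpos]; positivity)
  have hA : |(1 - Real.exp (-(2 * n / phiv l))) / 2| ≤ 1 := by rw [abs_le]; constructor <;> linarith
  suffices hB : |2 * l / (1 - l) ^ 2 * (l ^ n - Real.exp (-(2 * n / phiv l)))| ≤ 8 by
    refine (abs_add_le _ _).trans (by linarith)
  have hln : |l ^ n| ≤ 1 := by
    rw [abs_pow]; exact pow_le_one₀ (abs_nonneg _) (abs_le.2 ⟨hl1.le, hl.2.le⟩)
  rw [abs_mul]
  rcases le_or_gt l 0 with h | h
  · have a1 : |2 * l / (1 - l) ^ 2| ≤ 2 := by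
      rw [abs_div, abs_of_pos (show 0 < (1 - l) ^ 2 by positivity), div_le_iff₀ (by positivity),
        abs_of_nonpos (by linarith)]
      nlinarith
    have a2 : |l ^ n - Real.exp (-(2 * n / phiv l))| ≤ 2 := by
      rw [abs_le] at *; constructor <;> linarith [hln.1, hln.2]
    calc _ ≤ (2:ℝ) * 2 := by gcongr
      _ ≤ 8 := by norm_num
  · obtain ⟨s, hs⟩ : ∃ s, s = (1 - l) / (1 + l) := ⟨_, rfl⟩
    have hs0 : 0 < s := by rw [hs]; positivity
    have hs1 : s < 1 := by rw [hs, div_lt_one (by positivity)]; linarith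
    have hls : (1 - s) / (1 + s) = l := by rw [hs]; field_simp; ring
    have hex : Real.exp (-(2 * n / phiv l)) = Real.exp (-(2 * s)) ^ n := by
      rw [← Real.exp_nat_mul, hs]; congr 1; unfold phiv; field_simp
    obtain ⟨c1, c2⟩ := exp_cmp hs0 hs1
    rw [hls] at c1 c2
    have a1 : |2 * l / (1 - l) ^ 2| ≤ 2 / s ^ 2 := by
      rw [abs_of_pos (by positivity), div_le_div_iff₀ (by positivity) (by positivity), hs]
      rw [div_pow, mul_div_assoc', div_le_iff₀ (by positivity)]
      have : l ≤ (1 + l) ^ 2 := by nlinarith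
      nlinarith [mul_le_mul_of_nonneg_left this (show 0 ≤ 2 * (1 - l) ^ 2 by positivity)]
    have a2 : |l ^ n - Real.exp (-(2 * n / phiv l))| ≤ 4 * s ^ 2 := by
      rw [hex, abs_sub_comm]
      have := abs_pow_sub_pow_le (Real.exp (-(2 * s))) l n
      rw [abs_of_nonneg (show 0 ≤ Real.exp (-(2 * s)) - l by linarith),
        abs_of_pos (Real.exp_pos _), abs_of_pos h, max_eq_left c1] at this
      refine this.trans ?_
      have b := n_exp_bd hs0 hs1 n
      calc _ ≤ (2 * s ^ 3) * n * Real.exp (-(2 * s)) ^ (n - 1) := by gcongr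
        _ = 2 * s ^ 2 * (n * s * Real.exp (-(2 * s)) ^ (n - 1)) := by ring
        _ ≤ 2 * s ^ 2 * 2 := by gcongr
        _ = _ := by ring
    calc _ ≤ 2 / s ^ 2 * (4 * s ^ 2) := by gcongr
      _ = 8 := by field_simp; norm_num

lemma var_approx {ν : Measure ℝ} [IsFiniteMeasure ν] (hν : ∀ᵐ l ∂ν, l ∈ Ioo (-1:ℝ) 1)
    {n : ℕ} (hn : 0 < n) :
    |VarSeqR ν n - n * JJ ν phiv (kQ 1) n| ≤ 9 * ν.real univ := by
  have hn' : (0:ℝ) < n := by exact_mod_cast hn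
  have hpos : ∀ᵐ l ∂ν, 0 < phiv l := hν.mono fun l hl => phiv_pos hl
  have i2 := (jj_int phiv_meas hpos (adm_kQ one_pos) hn').const_mul (n:ℝ)
  have hm : Measurable (DD n) := by unfold DD; fun_prop
  have i3 : Integrable (fun l => DD n l - n * (phiv l * kQ 1 (phiv l / n))) ν := by
    refine Integrable.mono' (integrable_const 9) (hm.aestronglyMeasurable.sub i2.aestronglyMeasurable) ?_
    filter_upwards [hν] with l hl
    exact dd_bound hn hl
  have i1 : Integrable (DD n) ν := by
    refine (i3.add i2).congr (ae_of_all _ fun l => ?_)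
    simp
  have e : VarSeqR ν n - n * JJ ν phiv (kQ 1) n = 
      ∫ l, (DD n l - n * (phiv l * kQ 1 (phiv l / n))) ∂ν := by
    rw [integral_sub i1 i2, integral_const_mul]; rfl
  rw [e, ← Real.norm_eq_abs]
  refine norm_integral_le_of_norm_le_const ?_
  filter_upwards [hν] with l hl
  exact dd_bound hn hl


lemma kQ_mono {v z z' : ℝ} (hv : 0 < v) (hz : 0 < z) (hzz : z ≤ z') : kQ z v ≤ kQ z' v := by
  unfold kQ
  have e : Real.exp (-(2 * z' / v)) = Real.exp (-(2 * z / v)) * Real.exp (-(2 * (z' - z) / v)) := by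
    rw [← Real.exp_add]; congr 1; field_simp; ring
  have h1 := Real.add_one_le_exp (-(2 * (z' - z) / v))
  have h2 : Real.exp (-(2 * z / v)) ≤ 1 := Real.exp_le_one_iff.2 (by rw [neg_nonpos]; positivity)
  have h3 : Real.exp (-(2 * (z' - z) / v)) ≤ 1 := Real.exp_le_one_iff.2 (by
    rw [neg_nonpos]; exact div_nonneg (by linarith) hv.le)
  have h4 : Real.exp (-(2 * z / v)) - Real.exp (-(2 * z' / v)) ≤ 2 * (z' - z) / v := by
    rw [e]
    nlinarith [Real.exp_pos (-(2 * z / v))]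
  have h5 : v * (Real.exp (-(2 * z / v)) - Real.exp (-(2 * z' / v))) ≤ 2 * (z' - z) := by
    calc _ ≤ v * (2 * (z' - z) / v) := by gcongr
      _ = _ := by field_simp
  linarith

lemma kQ_scale {v T : ℝ} (hv : 0 < v) (hT : 0 < T) : T * (v * kQ 1 (v / T)) = v * kQ T v := by
  unfold kQ
  rw [show 2 * 1 / (v / T) = 2 * T / v by field_simp]
  field_simp

lemma tj_mono {ν : Measure ℝ} [IsFiniteMeasure ν] (hpos : ∀ᵐ l ∂ν, 0 < phiv l) {T T' : ℝ}
    (hT : 0 < T) (h : T ≤ T') : T * JJ ν phiv (kQ 1) T ≤ T' * JJ ν phiv (kQ 1) T' := by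
  have hT' := hT.trans_le h
  unfold JJ
  rw [← integral_const_mul, ← integral_const_mul]
  refine integral_mono_ae ((jj_int phiv_meas hpos (adm_kQ one_pos) hT).const_mul T)
    ((jj_int phiv_meas hpos (adm_kQ one_pos) hT').const_mul T') ?_
  filter_upwards [hpos] with l hl
  rw [kQ_scale hl hT, kQ_scale hl hT']
  exact mul_le_mul_of_nonneg_left (kQ_mono hl hT h) hl.le

lemma jj_lower {ν : Measure ℝ} [IsFiniteMeasure ν] (hν : ν ≠ 0) (hpos : ∀ᵐ l ∂ν, 0 < phiv l) :
    ∃ c > 0, ∀ T ≥ 1, c ≤ JJ ν phiv (kQ 1) T := by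
  have h0 : 0 < JJ ν phiv u0 1 := by
    unfold JJ
    have hnn : 0 ≤ᵐ[ν] fun l => phiv l * u0 (phiv l / 1) := by
      filter_upwards [hpos] with l hl
      exact (mul_pos hl (u0_pos (by simpa using hl))).le
    rw [integral_pos_iff_support_of_nonneg_ae hnn (jj_int phiv_meas hpos adm_u0 one_pos)]
    rw [pos_iff_ne_zero]
    intro hz
    apply hν
    rw [← ae_eq_bot, ← Filter.eventually_false_iff_eq_bot]
    filter_upwards [hpos, measure_eq_zero_iff_ae_notMem.1 hz] with l hl hl2
    apply hl2
    exact (mul_pos hl (u0_pos (by simpa using hl))).ne'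
  refine ⟨JJ ν phiv u0 1 / 2, by positivity, fun T hT => ?_⟩
  have hT0 : 0 < T := by linarith
  have h1 := jj_mono phiv_meas hpos (adm_kQ one_pos) (fun v hv => kQ_lower hv) hT0
  have h2 : JJ ν phiv u0 1 ≤ JJ ν phiv u0 T := by
    refine integral_mono_ae (jj_int phiv_meas hpos adm_u0 one_pos) (jj_int phiv_meas hpos adm_u0 hT0) ?_
    filter_upwards [hpos] with l hl
    refine mul_le_mul_of_nonneg_left ?_ hl.le
    unfold u0
    have : phiv l / T ≤ phiv l / 1 := by gcongr
    gcongr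
  linarith

lemma var_nat {ν : Measure ℝ} [IsFiniteMeasure ν] (hν0 : ν ≠ 0)
    (hν : ∀ᵐ l ∂ν, l ∈ Ioo (-1:ℝ) 1) :
    Tendsto (fun n : ℕ => VarSeqR ν n / (n * JJ ν phiv (kQ 1) n)) atTop (𝓝 1) := by
  have hpos : ∀ᵐ l ∂ν, 0 < phiv l := hν.mono fun l hl => phiv_pos hl
  obtain ⟨c, hc, hJ⟩ := jj_lower hν0 hpos
  have h1 : Tendsto (fun n : ℕ => (9 * ν.real univ / c) / (n:ℝ)) atTop (𝓝 0) :=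
    tendsto_const_div_atTop_nhds_zero_nat _
  rw [← tendsto_sub_nhds_zero_iff]
  refine squeeze_zero_norm' ?_ h1
  filter_upwards [eventually_ge_atTop 1] with n hn
  have hn1 : (1:ℝ) ≤ n := by exact_mod_cast hn
  have hJn := hJ n hn1
  have hJ0 : 0 < JJ ν phiv (kQ 1) n := by linarith
  have := var_approx hν (n := n) (by omega)
  have e : VarSeqR ν n / (n * JJ ν phiv (kQ 1) n) - 1 = 
    (VarSeqR ν n - n * JJ ν phiv (kQ 1) n) / (n * JJ ν phiv (kQ 1) n) := by
    field_simp
  rw [e, norm_div, Real.norm_eq_abs, Real.norm_of_nonneg (by positivity), div_div]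
  rw [mul_comm c]
  gcongr

lemma nat_real {h : ℝ → ℝ} (hh : SlowlyVaryingAtTop h) (ρ : ℝ) {G : ℝ → ℝ}
    (hG : ∀ T T', 0 < T → T ≤ T' → G T ≤ G T')
    (hlim : Tendsto (fun n : ℕ => G n / HH ρ h n) atTop (𝓝 1)) :
    Tendsto (fun T : ℝ => G T / HH ρ h T) atTop (𝓝 1) := by
  have hfl : Tendsto (fun T : ℝ => ((⌊T⌋₊ : ℕ) : ℝ) / T) atTop (𝓝 1) := tendsto_nat_floor_div_atTop
  have hfl2 : Tendsto (fun T : ℝ => ((⌊T⌋₊ + 1 : ℕ) : ℝ) / T) atTop (𝓝 1) := by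
    have := hfl.add tendsto_inv_atTop_zero
    rw [add_zero] at this
    refine this.congr fun T => ?_
    push_cast; rw [add_div, one_div]
  have t1 : Tendsto (fun T : ℝ => ⌊T⌋₊) atTop atTop := tendsto_nat_floor_atTop
  have t2 : Tendsto (fun T : ℝ => ⌊T⌋₊ + 1) atTop atTop := (tendsto_add_atTop_nat 1).comp t1
  have r1 := hh_uct hh ρ one_pos tendsto_id hfl
  have r2 := hh_uct hh ρ one_pos tendsto_id hfl2
  have s1 := (hlim.comp t1).mul r1
  have s2 := (hlim.comp t2).mul r2
  rw [Real.one_rpow, one_mul] at s1 s2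
  refine tendsto_of_tendsto_of_tendsto_of_le_of_le' s1 s2 ?_ ?_
  · filter_upwards [eventually_ge_atTop 1] with T hT
    have hT0 : 0 < T := by linarith
    have hf : 0 < ⌊T⌋₊ := Nat.floor_pos.2 hT
    have hf' : (0:ℝ) < ⌊T⌋₊ := by exact_mod_cast hf
    have p1 := hh_pos hh ρ _ hf'
    have p2 := hh_pos hh ρ _ hT0
    have := hG _ _ hf' (Nat.floor_le hT0.le)
    simp only [Function.comp, id]
    rw [div_mul_div_cancel₀ p1.ne']
    gcongr
  · filter_upwards [eventually_ge_atTop 1] with T hT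
    have hT0 : 0 < T := by linarith
    have hf' : (0:ℝ) < ((⌊T⌋₊ + 1 : ℕ) : ℝ) := by positivity
    have p1 := hh_pos hh ρ _ hf'
    have p2 := hh_pos hh ρ _ hT0
    have := hG T ((⌊T⌋₊ + 1 : ℕ) : ℝ) hT0 (by push_cast; exact (Nat.lt_floor_add_one T).le)
    simp only [Function.comp, id]
    rw [div_mul_div_cancel₀ p1.ne']
    gcongr

lemma hh_mul {h : ℝ → ℝ} (ρ : ℝ) {T : ℝ} (hT : 0 < T) : HH (1 + ρ) h T = T * HH ρ h T := by
  unfold HH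
  rw [Real.rpow_add hT, Real.rpow_one]; ring

theorem var_iff {ν : Measure ℝ} [IsFiniteMeasure ν] (hν0 : ν ≠ 0)
    (hν : ∀ᵐ l ∂ν, l ∈ Ioo (-1:ℝ) 1) {h : ℝ → ℝ} (hh : SlowlyVaryingAtTop h) (ρ : ℝ) :
    Tendsto (fun n : ℕ => VarSeqR ν n / ((n : ℝ) ^ (1 + ρ) * h n)) atTop (𝓝 1) ↔
    Tendsto (fun T => JJ ν phiv (kQ 1) T / HH ρ h T) atTop (𝓝 1) := by
  have hpos : ∀ᵐ l ∂ν, 0 < phiv l := hν.mono fun l hl => phiv_pos hl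
  obtain ⟨c, hc, hJ⟩ := jj_lower hν0 hpos
  have hv := var_nat hν0 hν
  constructor
  · intro hl
    have h1 := hl.div hv one_ne_zero
    rw [div_one] at h1
    have h2 : Tendsto (fun n : ℕ => ((n:ℝ) * JJ ν phiv (kQ 1) n) / HH (1 + ρ) h n) atTop (𝓝 1) := by
      refine h1.congr' ?_
      have hne := hv.eventually_const_lt one_pos
      filter_upwards [eventually_ge_atTop 1, hne] with n hn hr
      have hn1 : (1:ℝ) ≤ n := by exact_mod_cast hn
      have hn0 : (0:ℝ) < n := by linarith
      have hJ0 : 0 < JJ ν phiv (kQ 1) n := by linarith [hJ n hn1]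
      have hne : VarSeqR ν n ≠ 0 := by
        intro h0; rw [h0, zero_div] at hr; exact lt_irrefl _ hr
      have := hh.1 _ hn0
      have := Real.rpow_pos_of_pos hn0 (1 + ρ)
      simp only [Pi.div_apply]
      unfold HH
      field_simp
    have h3 := nat_real hh (1 + ρ) (G := fun T => T * JJ ν phiv (kQ 1) T)
      (fun T T' a b => tj_mono hpos a b) h2
    refine h3.congr' ?_
    filter_upwards [eventually_gt_atTop 0] with T hT
    rw [hh_mul ρ hT, mul_div_mul_left _ _ hT.ne']
  · intro hl
    have h1 := (hl.comp tendsto_natCast_atTop_atTop).mul hv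
    rw [mul_one] at h1
    refine h1.congr' ?_
    filter_upwards [eventually_ge_atTop 1] with n hn
    have hn1 : (1:ℝ) ≤ n := by exact_mod_cast hn
    have hn0 : (0:ℝ) < n := by linarith
    have hJ0 : 0 < JJ ν phiv (kQ 1) n := by linarith [hJ n hn1]
    have := hh_pos hh ρ _ hn0
    have e : (n : ℝ) ^ (1 + ρ) * h n = n * HH ρ h n := hh_mul ρ hn0
    rw [e]
    simp only [Function.comp]
    field_simp


lemma poisson_den_pos {l : ℝ} (hl : l ∈ Ioo (-1:ℝ) 1) (t : ℝ) : 0 < 1 + l ^ 2 - 2 * l * Real.cos t := by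
  have h1 := Real.neg_one_le_cos t
  have h2 := Real.cos_le_one t
  have h3 := hl.1
  have h4 := hl.2
  rcases le_total 0 l with h | h
  · nlinarith [mul_le_mul_of_nonneg_left h2 h, pow_pos (show 0 < 1 - l by linarith) 2]
  · nlinarith [mul_le_mul_of_nonneg_left h1 (show 0 ≤ -l by linarith), pow_pos (show 0 < 1 + l by linarith) 2]

noncomputable def PP (l t : ℝ) : ℝ := (1 - l ^ 2) / (1 + l ^ 2 - 2 * l * Real.cos t)

lemma pp_nonneg {l : ℝ} (hl : l ∈ Ioo (-1:ℝ) 1) (t : ℝ) : 0 ≤ PP l t :=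
  div_nonneg (by nlinarith [hl.1, hl.2]) (poisson_den_pos hl t).le

lemma pp_cont {l : ℝ} (hl : l ∈ Ioo (-1:ℝ) 1) : Continuous (PP l) := by
  unfold PP
  exact continuous_const.div (by fun_prop) (fun t => (poisson_den_pos hl t).ne')

lemma pp_deriv {l : ℝ} (hl : l ∈ Ioo (-1:ℝ) 1) {t : ℝ} (h0 : 0 ≤ t) (h1 : t < Real.pi) :
    HasDerivAt (fun t => 2 * Real.arctan (phiv l * Real.tan (t / 2))) (PP l t) t := by
  have hc : 0 < Real.cos (t / 2) := Real.cos_pos_of_mem_Ioo ⟨by linarith [Real.pi_pos], by linarith⟩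
  have d1 : HasDerivAt (fun t : ℝ => t / 2) (1 / 2) t := (hasDerivAt_id t).div_const 2
  have d2 := (Real.hasDerivAt_tan hc.ne').comp t d1
  have d3 := ((d2.const_mul (phiv l)).arctan).const_mul 2
  refine d3.congr_deriv ?_
  simp only [Function.comp]
  have hp := poisson_den_pos hl t
  have hl1 : 0 < 1 - l := by linarith [hl.2]
  have hct : Real.cos t = 2 * Real.cos (t / 2) ^ 2 - 1 := by
    rw [← Real.cos_two_mul]; congr 1; ring
  have hsq := Real.sin_sq_add_cos_sq (t / 2)
  unfold PP phiv
  rw [Real.tan_eq_sin_div_cos]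
  rw [hct] at hp ⊢
  set c := Real.cos (t / 2)
  set s := Real.sin (t / 2)
  have hs : s ^ 2 = 1 - c ^ 2 := by linarith
  have hden : 1 + ((1 + l) / (1 - l) * (s / c)) ^ 2 = 
      (1 + l ^ 2 - 2 * l * (2 * c ^ 2 - 1)) / ((1 - l) ^ 2 * c ^ 2) := by
    field_simp
    rw [hs]; ring
  rw [hden]
  have hp' := hp.ne'
  field_simp
  ring

lemma pp_integral {l : ℝ} (hl : l ∈ Ioo (-1:ℝ) 1) {x : ℝ} (h0 : 0 ≤ x) (h1 : x < Real.pi) :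
    ∫ t in Ioc 0 x, PP l t = 2 * Real.arctan (phiv l * Real.tan (x / 2)) := by
  rw [← intervalIntegral.integral_of_le h0,
    intervalIntegral.integral_eq_sub_of_hasDerivAt (f := fun t => 2 * Real.arctan (phiv l * Real.tan (t / 2)))
    (fun t ht => ?_) ((pp_cont hl).intervalIntegrable _ _)]
  · simp
  · rw [uIcc_of_le h0] at ht
    exact pp_deriv hl ht.1 (ht.2.trans_lt h1)

lemma pp_swap {ν : Measure ℝ} [IsFiniteMeasure ν] (hν : ∀ᵐ l ∂ν, l ∈ Ioo (-1:ℝ) 1)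
    {x : ℝ} (h0 : 0 ≤ x) (h1 : x < Real.pi) :
    ∫ t in Ioc 0 x, ∫ l, PP l t ∂ν = ∫ l, 2 * Real.arctan (phiv l * Real.tan (x / 2)) ∂ν := by
  have hbd : ∀ᵐ l ∂ν, ∫ t in Ioc 0 x, PP l t = 2 * Real.arctan (phiv l * Real.tan (x / 2)) :=
    hν.mono fun l hl => pp_integral hl h0 h1
  have hInteg : Integrable (Function.uncurry fun t l => PP l t) ((volume.restrict (Ioc 0 x)).prod ν) := by
    rw [integrable_prod_iff']
    · constructor
      · filter_upwards [hν] with l hl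
        have := (pp_cont hl).integrableOn_Icc (μ := volume) (a := 0) (b := x)
        exact this.mono_set Ioc_subset_Icc_self
      · have : Integrable (fun l => 2 * Real.arctan (phiv l * Real.tan (x / 2))) ν := by
          refine Integrable.mono' (integrable_const Real.pi) ?_ (ae_of_all _ fun l => ?_)
          · apply Measurable.aestronglyMeasurable
            exact ((Real.measurable_arctan.comp (phiv_meas.mul_const _))).const_mul 2
          · rw [Real.norm_eq_abs, abs_le]
            have a1 := Real.neg_pi_div_two_lt_arctan (phiv l * Real.tan (x / 2))
            have a2 := Real.arctan_lt_pi_div_two (phiv l * Real.tan (x / 2))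
            constructor <;> linarith
        refine this.congr ?_
        filter_upwards [hν, hbd] with l hl hb
        rw [← hb]
        refine integral_congr_ae (ae_of_all _ fun t => ?_)
        simp only [Function.uncurry]
        rw [Real.norm_of_nonneg (pp_nonneg hl t)]
    · apply Measurable.aestronglyMeasurable
      simp only [Function.uncurry_def, PP]
      fun_prop
  rw [integral_integral_swap hInteg]
  exact integral_congr_ae hbd

lemma F_eq {ν : Measure ℝ} [IsFiniteMeasure ν] (hν : ∀ᵐ l ∂ν, l ∈ Ioo (-1:ℝ) 1)
    {f F : ℝ → ℝ}
    (hf : ∀ t : ℝ, f t = (1 / (2 * Real.pi)) *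
      ∫ l in Set.Icc (-1 : ℝ) 1, (1 - l ^ 2) / (1 + l ^ 2 - 2 * l * Real.cos t) ∂ν)
    (hF : ∀ x : ℝ, F x = ∫ t in (0:ℝ)..x, f t) {x : ℝ} (h0 : 0 < x) (h1 : x < Real.pi) :
    F x = Real.tan (x / 2) / Real.pi * JJ ν phiv (kA 1) (1 / Real.tan (x / 2)) := by
  have hr : ν.restrict (Icc (-1:ℝ) 1) = ν := by
    rw [Measure.restrict_eq_self_of_ae_mem]
    exact hν.mono fun l hl => Ioo_subset_Icc_self hl
  have hy : 0 < Real.tan (x / 2) := Real.tan_pos_of_pos_of_lt_pi_div_two (by linarith) (by linarith)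
  rw [hF, intervalIntegral.integral_of_le h0.le]
  simp_rw [hf, hr]
  rw [integral_const_mul]
  have := pp_swap hν h0.le h1
  unfold PP at this
  rw [this]
  unfold JJ
  rw [← integral_const_mul, ← integral_const_mul]
  refine integral_congr_ae ?_
  filter_upwards [hν] with l hl
  have hv := phiv_pos hl
  have hpi := Real.pi_pos
  unfold kA
  rw [show 1 * (phiv l / (1 / Real.tan (x / 2))) = phiv l * Real.tan (x / 2) by field_simp]
  field_simp

lemma cconst_pos {ρ : ℝ} (h0 : 0 ≤ ρ) (h1 : ρ < 1) : 0 < Cconst (1 + ρ) := by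
  unfold Cconst
  have hpi := Real.pi_pos
  have := Real.Gamma_pos_of_pos (show 0 < 1 + (1 + ρ) by linarith)
  have : 0 < Real.sin ((1 + ρ) * Real.pi / 2) :=
    Real.sin_pos_of_pos_of_lt_pi (by positivity) (by nlinarith)
  have : 0 < 2 - (1 + ρ) := by linarith
  positivity

lemma tan_half_lim : Tendsto (fun x : ℝ => (1 / Real.tan (x / 2)) / (1 / x)) (𝓝[>] 0) (𝓝 2) := by
  have d1 : HasDerivAt (fun t : ℝ => t / 2) (1 / 2) 0 := (hasDerivAt_id (0:ℝ)).div_const 2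
  have d2 := (Real.hasDerivAt_tan (x := 0 / 2) (by simp)).comp (0:ℝ) d1
  have h := d2.tendsto_slope_zero_right
  simp at h
  have h2 := h.inv₀ (by norm_num)
  rw [inv_inv] at h2
  refine h2.congr fun x => ?_
  rw [mul_inv, inv_inv, one_div, one_div, div_inv_eq_mul, mul_comm]

lemma tan_half_atTop : Tendsto (fun x : ℝ => 1 / Real.tan (x / 2)) (𝓝[>] 0) atTop := by
  simp_rw [one_div]
  refine tendsto_inv_nhdsGT_zero.comp ?_
  rw [tendsto_nhdsWithin_iff]
  constructor
  · have : ContinuousAt (fun x : ℝ => Real.tan (x / 2)) 0 := by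
      have hc : ContinuousAt Real.tan (0 / 2) := Real.continuousAt_tan.2 (by simp)
      exact ContinuousAt.comp (f := fun x : ℝ => x / 2) hc (by fun_prop)
    have h := this.tendsto
    simp at h
    exact h.mono_left nhdsWithin_le_nhds
  · have : Ioo (0:ℝ) Real.pi ∈ 𝓝[>] (0:ℝ) := Ioo_mem_nhdsGT Real.pi_pos
    filter_upwards [this] with x hx
    exact Real.tan_pos_of_pos_of_lt_pi_div_two (by linarith [hx.1]) (by linarith [hx.2])

lemma arctan_inv_lim : Tendsto (fun T : ℝ => 2 * Real.arctan T⁻¹) atTop (𝓝[>] 0) := by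
  rw [tendsto_nhdsWithin_iff]
  constructor
  · have := ((Real.continuous_arctan.tendsto 0).comp tendsto_inv_atTop_zero).const_mul 2
    simpa using this
  · filter_upwards [eventually_gt_atTop 0] with T hT
    have := Real.arctan_pos.2 (inv_pos.2 hT)
    simpa using this

theorem F_iff {ν : Measure ℝ} [IsFiniteMeasure ν] (hν : ∀ᵐ l ∂ν, l ∈ Ioo (-1:ℝ) 1)
    {f F : ℝ → ℝ}
    (hf : ∀ t : ℝ, f t = (1 / (2 * Real.pi)) *
      ∫ l in Set.Icc (-1 : ℝ) 1, (1 - l ^ 2) / (1 + l ^ 2 - 2 * l * Real.cos t) ∂ν)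
    (hF : ∀ x : ℝ, F x = ∫ t in (0:ℝ)..x, f t)
    {h : ℝ → ℝ} (hh : SlowlyVaryingAtTop h) {ρ : ℝ} {C : ℝ} (hC : 0 < C) :
    Tendsto (fun x : ℝ => F x / ((1/2) * C * x ^ (1 - ρ) * h (1/x))) (𝓝[>] (0:ℝ)) (𝓝 1) ↔
    Tendsto (fun T => JJ ν phiv (kA 1) T / HH ρ h T) atTop (𝓝 (Real.pi * C * 2 ^ (-ρ))) := by
  have hpi := Real.pi_pos
  set T : ℝ → ℝ := fun x => 1 / Real.tan (x / 2) with hTd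
  have hinv : Tendsto (fun x : ℝ => 1 / x) (𝓝[>] 0) atTop := by
    simp_rw [one_div]; exact tendsto_inv_nhdsGT_zero
  have m1 := hh_uct hh ρ two_pos hinv tan_half_lim
  have m2 := (tan_half_lim.const_mul (Real.pi * C / 2)).inv₀ (by positivity)
  set M : ℝ → ℝ := fun x => HH ρ h (T x) / HH ρ h (1 / x) * (Real.pi * C / 2 * (T x / (1 / x)))⁻¹ with hM
  have h2p : (0:ℝ) < 2 ^ ρ := by positivity
  have hMlim : Tendsto M (𝓝[>] 0) (𝓝 (Real.pi * C * 2 ^ (-ρ))⁻¹) := by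
    convert m1.mul m2 using 2
    rw [Real.rpow_neg zero_le_two]; field_simp
  have hEq : ∀ᶠ x in 𝓝[>] (0:ℝ), F x / ((1/2) * C * x ^ (1 - ρ) * h (1/x)) = 
      JJ ν phiv (kA 1) (T x) / HH ρ h (T x) * M x ∧ 0 < M x := by
    have : Ioo (0:ℝ) Real.pi ∈ 𝓝[>] (0:ℝ) := Ioo_mem_nhdsGT Real.pi_pos
    filter_upwards [this] with x hx
    have hx0 : 0 < x := hx.1
    have hy : 0 < Real.tan (x / 2) :=
      Real.tan_pos_of_pos_of_lt_pi_div_two (by linarith [hx.1]) (by linarith [hx.2])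
    have hT : 0 < T x := by simp only [hTd]; positivity
    have p1 := hh_pos hh ρ _ hT
    have p2 := hh_pos hh ρ (1 / x) (by positivity)
    refine ⟨?_, by simp only [hM]; positivity⟩
    have e1 : x ^ (1 - ρ) * h (1 / x) = x * HH ρ h (1 / x) := by
      unfold HH
      rw [Real.rpow_sub hx0, Real.rpow_one, one_div, Real.inv_rpow hx0.le]
      ring
    rw [mul_assoc, e1, F_eq hν hf hF hx.1 hx.2]
    have e2 : Real.tan (x / 2) = 1 / T x := by simp [hTd]
    simp only [hM]
    rw [show (1 / Real.tan (x / 2)) = T x from rfl, e2]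
    field_simp
  constructor
  · intro hl
    have h1 := hl.div hMlim (by positivity)
    rw [one_div (Real.pi * C * 2 ^ (-ρ))⁻¹, inv_inv] at h1
    have h2 : Tendsto (fun x => JJ ν phiv (kA 1) (T x) / HH ρ h (T x)) (𝓝[>] 0) (𝓝 (Real.pi * C * 2 ^ (-ρ))) := by
      refine h1.congr' ?_
      filter_upwards [hEq] with x hx
      simp only [Pi.div_apply]
      rw [hx.1, mul_div_assoc, div_self hx.2.ne', mul_one]
    have h3 := h2.comp arctan_inv_lim
    refine h3.congr fun t => ?_
    have : T (2 * Real.arctan t⁻¹) = t := by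
      simp only [hTd]
      rw [mul_div_cancel_left₀ _ two_ne_zero, Real.tan_arctan, one_div, inv_inv]
    simp only [Function.comp, this]
  · intro hl
    have h1 := (hl.comp tan_half_atTop).mul hMlim
    rw [mul_inv_cancel₀ (by positivity)] at h1
    refine h1.congr' ?_
    filter_upwards [hEq] with x hx
    rw [hx.1]; rfl

theorem main_core
    (ν : Measure ℝ) [IsFiniteMeasure ν]
    (hsupp : ν (Set.Icc (-1 : ℝ) 1)ᶜ = 0)
    (hm1 : ν {(-1 : ℝ)} = 0) (h1 : ν {(1 : ℝ)} = 0)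
    (α : ℝ) (hα : α ∈ Set.Ico (1:ℝ) 2)
    (h : ℝ → ℝ) (hh : SlowlyVaryingAtTop h)
    (f : ℝ → ℝ)
    (hf : ∀ t : ℝ, f t = (1 / (2 * Real.pi)) *
      ∫ l in Set.Icc (-1 : ℝ) 1, (1 - l ^ 2) / (1 + l ^ 2 - 2 * l * Real.cos t) ∂ν)
    (F : ℝ → ℝ) (hF : ∀ x : ℝ, F x = ∫ t in (0:ℝ)..x, f t) :
    Tendsto (fun n : ℕ => VarSeqR ν n / ((n : ℝ) ^ α * h n)) atTop (𝓝 1) ↔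
      Tendsto (fun x : ℝ => F x / ((1/2) * Cconst α * x ^ (2 - α) * h (1/x)))
        (𝓝[>] (0:ℝ)) (𝓝 1) := by
  obtain ⟨ρ, rfl⟩ : ∃ ρ, α = 1 + ρ := ⟨α - 1, by ring⟩
  have hr0 : 0 ≤ ρ := by linarith [hα.1]
  have hr1 : ρ < 1 := by linarith [hα.2]
  have hν : ∀ᵐ l ∂ν, l ∈ Ioo (-1:ℝ) 1 := by
    have a1 : ∀ᵐ l ∂ν, l ∈ Icc (-1:ℝ) 1 := hsupp
    filter_upwards [a1, measure_eq_zero_iff_ae_notMem.1 hm1, measure_eq_zero_iff_ae_notMem.1 h1]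
      with l p1 p2 p3
    exact ⟨lt_of_le_of_ne p1.1 fun h => p2 h.symm, lt_of_le_of_ne p1.2 fun h => p3 h⟩
  have hpos : ∀ᵐ l ∂ν, 0 < phiv l := hν.mono fun l hl => phiv_pos hl
  have hC := cconst_pos hr0 hr1
  rw [show 2 - (1 + ρ) = 1 - ρ by ring, F_iff hν hf hF hh hC]
  have hpi := Real.pi_pos
  by_cases hz : ν = 0
  · subst hz
    simp only [VarSeqR, JJ, integral_zero_measure, zero_div, tendsto_const_nhds_iff]
    have : Real.pi * Cconst (1 + ρ) * 2 ^ (-ρ) ≠ 0 := by positivity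
    constructor
    · intro h; exact absurd h zero_ne_one
    · intro h; exact absurd h.symm this
  rw [var_iff hz hν hh ρ]
  have hq := lam_kQ_pos hr0 hr1
  set q := Lam ρ (kQ 1) with hqd
  have key := tauber (μ := ν) phiv_meas hpos hr0 hr1 (H := fun t => HH ρ h t / q)
    (fun t ht => div_pos (hh_pos hh ρ t ht) hq) (fun s hs => by
      refine (hh_rv hh ρ s hs).congr fun t => ?_
      rw [div_div_div_cancel_right₀ hq.ne'])
  rw [lam_ratio hr0 hr1, ← hqd] at key
  have scal : ∀ (g : ℝ → ℝ) (a : ℝ), Tendsto (fun T => JJ ν phiv g T / HH ρ h T) atTop (𝓝 a) ↔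
      Tendsto (fun T => JJ ν phiv g T / (HH ρ h T / q)) atTop (𝓝 (a * q)) := by
    intro g a
    have e : (fun T => JJ ν phiv g T / (HH ρ h T / q)) = fun T => JJ ν phiv g T / HH ρ h T * q := by
      ext T; rw [div_div_eq_mul_div]; ring
    rw [e]
    constructor
    · exact fun h => h.mul_const q
    · intro h
      have := h.div_const q
      simpa [mul_div_assoc, div_self hq.ne'] using this
  rw [scal, scal, one_mul]
  exact key

/-- **Corollary 2.3 (equivalence part).**  Let `ν` be a finite measure on `[-1,1]`
with no atoms at `±1` (the transition spectral measure of a reversible Markov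
chain), `f` the associated spectral density, `F(x) = ∫₀ˣ f`.  For `α ∈ [1,2)`
and `h` slowly varying: `Var_n ~ n^α h(n)` as `n → ∞` iff
`F(x) ~ (1/2) C(α) x^{2-α} h(1/x)` as `x → 0⁺`. -/
theorem reversible_regular_variation_iff_spectral_distribution
    (ν : Measure ℝ) [IsFiniteMeasure ν]
    (hsupp : ν (Set.Icc (-1 : ℝ) 1)ᶜ = 0)
    (hm1 : ν {(-1 : ℝ)} = 0) (h1 : ν {(1 : ℝ)} = 0)
    (α : ℝ) (hα : α ∈ Set.Ico (1:ℝ) 2)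
    (h : ℝ → ℝ) (hh : SlowlyVaryingAtTop h)
    (f : ℝ → ℝ)
    (hf : ∀ t : ℝ, f t = (1 / (2 * Real.pi)) *
      ∫ l in Set.Icc (-1 : ℝ) 1, (1 - l ^ 2) / (1 + l ^ 2 - 2 * l * Real.cos t) ∂ν)
    (F : ℝ → ℝ) (hF : ∀ x : ℝ, F x = ∫ t in (0:ℝ)..x, f t) :
    Tendsto (fun n : ℕ => VarSeqR ν n / ((n : ℝ) ^ α * h n)) atTop (𝓝 1) ↔
      Tendsto (fun x : ℝ => F x / ((1/2) * Cconst α * x ^ (2 - α) * h (1/x)))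
        (𝓝[>] (0:ℝ)) (𝓝 1) :=
  main_core ν hsupp hm1 h1 α hα h hh f hf F hF
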